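/- Let p ≡ −1 (mod 8) be a prime and let h(−2p) denote the class number of the imaginary quadratic field ℚ(√(−2p)). Then 8 ∥ h(−2p) (i.e., 8 ∣ h(−2p) and 16 ∤ h(−2p)) if and only if p ≡ −1 (mod 16) and (−1)^((p+1)/16)·(p) = −1, where (p) denotes the Jacobi symbol (2u/v) for any positive integers u, v with p = u² − 2v². -/

import Mathlib

open Polynomial NumberField

/-!
Up to an integer factor, an ideal of `ℤ[√-2p]` has cyclic quotient, hence is the kernel of a
homomorphism to some `ZMod n`, and its norm is `n`. The classes of order dividing two are ambiguous,
hence generated by the class of the prime `𝔭₂` above `2`, which is not principal. So the `2`-part of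
the class group is cyclic, and an ideal of odd norm `n` has a square class if and only if
`χ₈ n = 1`: this is necessary because `χ₈` is trivial on odd norms of elements, and sufficient
because some prime `q ≡ 3 (mod 8)` is the norm of an ideal.

Writing `p = u² - 2v²` gives an ideal of norm `u` whose class squares to the class of `𝔭₂`, so that
`8 ∣ h` if and only if `χ₈ u = 1`, that is, `p ≡ -1 (mod 16)`. In that case choose an ideal of odd
norm `w` whose class squares to the inverse of that class; then `16 ∣ h` if and only if `χ₈ w = 1`.
The resulting principal ideal of norm `u w²` yields a solution of
`w² = u s² + 4 v s y + 2 u y²`. Reading this equation modulo `16` and modulo the divisors of `u`,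
`s` and `y`, quadratic reciprocity gives `χ₈ w = (-1) ^ ((p + 1) / 16) * (2u / v)`.
-/

/-! ### Ideals of `ℤ√d` with cyclic quotient -/

/-- The `ℤ`-basis `1, √d` of `ℤ√d`, through which ranks and norms are computed. -/
noncomputable def zsqrtdBasis (d : ℤ) : Module.Basis (Fin 2) ℤ (ℤ√d) :=
  .ofEquivFun
    { toFun z := ![z.re, z.im]
      invFun v := ⟨v 0, v 1⟩
      map_add' z w := by ext i; fin_cases i <;> simp
      map_smul' c z := by ext i; fin_cases i <;> simp
      left_inv z := by simp
      right_inv v := by ext i; fin_cases i <;> simp }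

section Zsqrtd

variable {d : ℤ}

instance : Module.Free ℤ (ℤ√d) := .of_basis (zsqrtdBasis d)

instance : Module.Finite ℤ (ℤ√d) := .of_basis (zsqrtdBasis d)

lemma algebraNorm_zsqrtd (z : ℤ√d) : Algebra.norm ℤ z = z.norm := by
  rw [Algebra.norm_eq_matrix_det (zsqrtdBasis d), Matrix.det_fin_two]
  simp [Algebra.leftMulMatrix_eq_repr_mul, zsqrtdBasis, Zsqrtd.norm_def]

lemma map_zsqrtd {R : Type*} [Ring R] (f : ℤ√d →+* R) (z : ℤ√d) :
    f z = z.re + z.im * f Zsqrtd.sqrtd := by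
  have hz : z = z.re + z.im * (Zsqrtd.sqrtd : ℤ√d) := by ext <;> simp
  conv_lhs => rw [hz]
  simp only [map_add, map_mul, map_intCast]

variable [IsDedekindDomain (ℤ√d)]

lemma absNorm_span_zsqrtd (z : ℤ√d) : Ideal.absNorm (Ideal.span {z}) = z.norm.natAbs := by
  rw [Ideal.absNorm_span_singleton, algebraNorm_zsqrtd]

lemma absNorm_span_intCast (m : ℤ) : Ideal.absNorm (Ideal.span {(m : ℤ√d)}) = m.natAbs ^ 2 := by
  rw [absNorm_span_zsqrtd, Zsqrtd.norm_intCast, Int.natAbs_mul, sq]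

lemma absNorm_ker {n : ℕ} (f : ℤ√d →+* ZMod n) : Ideal.absNorm (RingHom.ker f) = n := by
  have e := RingHom.quotientKerEquivOfSurjective (ZMod.ringHom_surjective f)
  rw [Ideal.absNorm_apply, Submodule.cardQuot_apply, Nat.card_congr e.toEquiv, Nat.card_zmod]

end Zsqrtd

lemma eq_of_le_of_absNorm_eq {S : Type*} [CommRing S] [IsDedekindDomain S] [Module.Free ℤ S]
    [Module.Finite ℤ S] {I J : Ideal S} (h : I ≤ J) (hN : I.absNorm = J.absNorm)
    (h0 : I.absNorm ≠ 0) : I = J := by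
  obtain ⟨K, rfl⟩ := Ideal.dvd_iff_le.mpr h
  rw [map_mul] at hN h0
  have hK : K.absNorm = 1 := mul_left_cancel₀ (left_ne_zero_of_mul h0) (by rw [hN, mul_one])
  rw [Ideal.absNorm_eq_one_iff.mp hK, Ideal.mul_top]

section Kernels

open Zsqrtd (sqrtd)
open Ideal

variable {d : ℤ}

lemma mem_ker_iff_dvd {n : ℕ} {f : ℤ√d →+* ZMod n} {r : ℤ} (hf : f sqrtd = r) {z : ℤ√d} :
    z ∈ RingHom.ker f ↔ (n : ℤ) ∣ z.re + z.im * r := by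
  rw [RingHom.mem_ker, map_zsqrtd, hf, ← ZMod.intCast_zmod_eq_zero_iff_dvd]
  push_cast
  rfl

lemma exists_zsqrtd_hom {n : ℕ} {r : ℤ} (h : (n : ℤ) ∣ r ^ 2 - d) :
    ∃ f : ℤ√d →+* ZMod n, f sqrtd = r := by
  have hr : (r : ZMod n) * r = d := by
    rw [← sub_eq_zero]
    exact_mod_cast (ZMod.intCast_zmod_eq_zero_iff_dvd _ n).mpr (by simpa only [sq] using h)
  exact ⟨Zsqrtd.lift ⟨r, hr⟩, by simp⟩

lemma dvd_sq_sub_of_zsqrtd_hom {n : ℕ} {f : ℤ√d →+* ZMod n} {r : ℤ} (hf : f sqrtd = r) :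
    (n : ℤ) ∣ r ^ 2 - d := by
  rw [← ZMod.intCast_zmod_eq_zero_iff_dvd]
  have h := congrArg f (Zsqrtd.dmuld (d := d))
  rw [map_mul, hf, map_intCast] at h
  push_cast
  rw [sq, h, sub_self]

/-- The conjugate of an ideal of `ℤ√d`; an ambiguous ideal is one equal to its conjugate. -/
abbrev conjIdeal (I : Ideal (ℤ√d)) : Ideal (ℤ√d) := I.map (starRingEnd (ℤ√d))

lemma mem_conjIdeal {I : Ideal (ℤ√d)} {z : ℤ√d} : z ∈ conjIdeal I ↔ star z ∈ I := by
  rw [conjIdeal, mem_map_iff_of_surjective _ (Function.Involutive.surjective star_involutive)]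
  exact ⟨by rintro ⟨w, hw, rfl⟩; simpa [starRingEnd_apply] using hw, fun h ↦ ⟨_, h, star_star z⟩⟩

lemma conjIdeal_mul (I J : Ideal (ℤ√d)) : conjIdeal (I * J) = conjIdeal I * conjIdeal J :=
  Ideal.map_mul _ _ _

lemma conjIdeal_span_singleton (z : ℤ√d) : conjIdeal (span {z}) = span {star z} := by
  rw [conjIdeal, Ideal.map_span, Set.image_singleton, starRingEnd_apply]

lemma conjIdeal_ker {n : ℕ} (f : ℤ√d →+* ZMod n) :
    conjIdeal (RingHom.ker f) = RingHom.ker (f.comp (starRingEnd (ℤ√d))) := by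
  ext z
  exact mem_conjIdeal

lemma exists_eq_ker_of_im_eq_one {I : Ideal (ℤ√d)} {w : ℤ√d} (hw : w ∈ I) (hw1 : w.im = 1) :
    ∃ (n : ℕ) (f : ℤ√d →+* ZMod n), I = RingHom.ker f := by
  set n := (Submodule.IsPrincipal.generator (I.comap (Int.castRingHom (ℤ√d)))).natAbs
  have hn (a : ℤ) : (a : ℤ√d) ∈ I ↔ (n : ℤ) ∣ a := by
    rw [Int.natAbs_dvd, ← Submodule.IsPrincipal.mem_iff_generator_dvd]
    rfl
  have hd : (n : ℤ) ∣ (-w.re) ^ 2 - d := by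
    rw [← hn]
    convert I.mul_mem_right (star w) hw using 1
    rw [← Zsqrtd.norm_eq_mul_conj, Zsqrtd.norm_def, hw1]
    push_cast
    ring
  obtain ⟨f, hf⟩ := exists_zsqrtd_hom hd
  refine ⟨n, f, Ideal.ext fun z ↦ ?_⟩
  have hz : z = (z.re + z.im * -w.re : ℤ) + z.im * w := by ext <;> simp [hw1]
  rw [mem_ker_iff_dvd hf, ← hn]
  conv_lhs => rw [hz]
  exact I.add_mem_iff_left (I.mul_mem_left _ hw)

lemma exists_im_dvd (I : Ideal (ℤ√d)) : ∃ w ∈ I, ∀ z ∈ I, w.im ∣ z.re ∧ w.im ∣ z.im := by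
  obtain ⟨m, hm⟩ := (inferInstance : ((I.restrictScalars ℤ).map
    ((LinearMap.proj (1 : Fin 2)).comp (zsqrtdBasis d).equivFun.toLinearMap)).IsPrincipal)
  have him (a : ℤ) : (∃ z ∈ I, z.im = a) ↔ m ∣ a := by
    rw [← mem_span_singleton, ← submodule_span_eq, ← hm]
    rfl
  obtain ⟨w, hwI, hw⟩ := (him m).mpr dvd_rfl
  refine ⟨w, hwI, fun z hz ↦ ⟨?_, ?_⟩⟩ <;> rw [hw, ← him]
  · exact ⟨sqrtd * z, I.mul_mem_left _ hz, by simp⟩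
  · exact ⟨z, hz, rfl⟩

variable [IsDedekindDomain (ℤ√d)]

lemma ker_mul_ker {n m : ℕ} {f : ℤ√d →+* ZMod n} {g : ℤ√d →+* ZMod m} {h : ℤ√d →+* ZMod (n * m)}
    {r : ℤ} (hf : f sqrtd = r) (hg : g sqrtd = r) (hh : h sqrtd = r) (hn : n ≠ 0) (hm : m ≠ 0) :
    RingHom.ker f * RingHom.ker g = RingHom.ker h := by
  refine eq_of_le_of_absNorm_eq (mul_le.mpr fun z hz w hw ↦ ?_)
    (by simp only [map_mul, absNorm_ker]) (by simp [absNorm_ker, hn, hm])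
  rw [mem_ker_iff_dvd hf] at hz
  rw [mem_ker_iff_dvd hg] at hw
  rw [mem_ker_iff_dvd hh]
  have hr := (dvd_sq_sub_of_zsqrtd_hom hh).mul_left (z.im * w.im)
  push_cast at hr ⊢
  have hzw : (z * w).re + (z * w).im * r =
      (z.re + z.im * r) * (w.re + w.im * r) - z.im * w.im * (r ^ 2 - d) := by
    rw [Zsqrtd.re_mul, Zsqrtd.im_mul]
    ring
  exact hzw ▸ dvd_sub (mul_dvd_mul hz hw) hr

lemma ker_mul_conjIdeal_ker {n : ℕ} (f : ℤ√d →+* ZMod n) (hn : n ≠ 0) :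
    RingHom.ker f * conjIdeal (RingHom.ker f) = span {(n : ℤ√d)} := by
  rw [conjIdeal_ker]
  refine eq_of_le_of_absNorm_eq (mul_le.mpr fun z hz w hw ↦ ?_)
    ?_ (by simp [absNorm_ker, hn])
  · obtain ⟨r, hr⟩ := ZMod.intCast_surjective (f sqrtd)
    have hrd := dvd_sq_sub_of_zsqrtd_hom hr.symm
    have hw' : star w ∈ RingHom.ker f := hw
    rw [mem_ker_iff_dvd hr.symm] at hz hw'
    simp only [Zsqrtd.re_star, Zsqrtd.im_star] at hw'
    have hre : (z * w).re = (z.re + z.im * r) * w.re + (w.re + -w.im * r) * (z.im * -r) +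
        (r ^ 2 - d) * (-z.im * w.im) := by
      rw [Zsqrtd.re_mul]
      ring
    have him : (z * w).im = (z.re + z.im * r) * w.im + (w.re + -w.im * r) * z.im := by
      rw [Zsqrtd.im_mul]
      ring
    rw [mem_span_singleton, ← Int.cast_natCast, Zsqrtd.intCast_dvd, hre, him]
    exact ⟨dvd_add (dvd_add (hz.mul_right _) (hw'.mul_right _)) (hrd.mul_right _),
      dvd_add (hz.mul_right _) (hw'.mul_right _)⟩
  · rw [map_mul, absNorm_ker, absNorm_ker, ← Int.cast_natCast, absNorm_span_intCast,
      Int.natAbs_natCast, sq]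

lemma exists_eq_span_mul_ker (I : Ideal (ℤ√d)) :
    ∃ (m : ℤ) (n : ℕ) (f : ℤ√d →+* ZMod n), I = span {(m : ℤ√d)} * RingHom.ker f := by
  obtain ⟨w, hwI, hw⟩ := exists_im_dvd I
  have hI : I ≤ span {(w.im : ℤ√d)} := fun z hz ↦
    mem_span_singleton.mpr ((Zsqrtd.intCast_dvd _ _).mpr (hw z hz))
  obtain ⟨J, hJ⟩ := dvd_iff_le.mpr hI
  obtain ⟨w', hw'J, hw'⟩ := mem_span_singleton_mul.mp (hJ ▸ hwI)
  rcases eq_or_ne w.im 0 with h0 | h0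
  · obtain ⟨f, -⟩ := exists_zsqrtd_hom (n := 1) (r := 0) (d := d) (by simp)
    exact ⟨0, 1, f, by simpa [h0] using hJ⟩
  · have h1 : w'.im = 1 := mul_left_cancel₀ h0 (by simpa using congrArg Zsqrtd.im hw')
    obtain ⟨n, f, rfl⟩ := exists_eq_ker_of_im_eq_one hw'J h1
    exact ⟨w.im, n, f, hJ⟩

end Kernels

section IdealClass

open Ideal nonZeroDivisors

variable {R : Type*} [CommRing R] [IsDedekindDomain R]

open Classical in
/-- The class of an ideal as a total function on ideals, with the junk value `1` at `⊥`. -/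
noncomputable def idealClass (I : Ideal R) : ClassGroup R :=
  if h : I ∈ (Ideal R)⁰ then ClassGroup.mk0 ⟨I, h⟩ else 1

lemma idealClass_of_ne_bot {I : Ideal R} (hI : I ≠ ⊥) :
    idealClass I = ClassGroup.mk0 ⟨I, mem_nonZeroDivisors_of_ne_zero hI⟩ :=
  dif_pos _

lemma idealClass_mul {I J : Ideal R} (hI : I ≠ ⊥) (hJ : J ≠ ⊥) :
    idealClass (I * J) = idealClass I * idealClass J := by
  rw [idealClass_of_ne_bot hI, idealClass_of_ne_bot hJ, idealClass_of_ne_bot (mul_ne_zero hI hJ),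
    ← map_mul]
  rfl

lemma idealClass_eq_one_iff {I : Ideal R} : idealClass I = 1 ↔ ∃ a, I = span {a} := by
  rcases eq_or_ne I ⊥ with rfl | hI
  · exact iff_of_true (dif_neg (by simp)) ⟨0, by simp⟩
  · rw [idealClass_of_ne_bot hI, ClassGroup.mk0_eq_one_iff]
    exact ⟨fun h ↦ h.principal, fun h ↦ ⟨h⟩⟩

lemma idealClass_span_singleton (a : R) : idealClass (span {a}) = 1 :=
  idealClass_eq_one_iff.mpr ⟨a, rfl⟩

lemma exists_idealClass_eq (c : ClassGroup R) : ∃ I : Ideal R, I ≠ ⊥ ∧ idealClass I = c := by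
  obtain ⟨⟨I, hI⟩, rfl⟩ := ClassGroup.mk0_surjective c
  exact ⟨I, nonZeroDivisors.ne_zero hI, dif_pos hI⟩

lemma exists_idealClass_eq_and_sup_eq_top (c : ClassGroup R) {J : Ideal R} (hJ : J ≠ ⊥) :
    ∃ I : Ideal R, I ≠ ⊥ ∧ idealClass I = c ∧ I ⊔ J = ⊤ := by
  obtain ⟨K, hK, hKc⟩ := exists_idealClass_eq c⁻¹
  obtain ⟨a, ha⟩ :=
    IsDedekindDomain.exists_sup_span_eq (mul_le_left : K * J ≤ K) (mul_ne_zero hK hJ)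
  obtain ⟨I, hI⟩ : K ∣ span {a} :=
    dvd_span_singleton.mpr (ha ▸ mem_sup_right (mem_span_singleton_self a))
  have hIJ : I ⊔ J = ⊤ := by
    rw [hI, ← Ideal.mul_sup, sup_comm] at ha
    exact mul_left_cancel₀ hK (ha.trans K.mul_top.symm)
  rcases eq_or_ne I ⊥ with rfl | hI0
  · obtain ⟨I', hI'0, hI'c⟩ := exists_idealClass_eq c
    exact ⟨I', hI'0, hI'c, by rw [← bot_sup_eq J, hIJ, sup_top_eq]⟩
  · refine ⟨I, hI0, ?_, hIJ⟩
    have h1 := idealClass_span_singleton a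
    rwa [hI, idealClass_mul hK hI0, hKc, inv_mul_eq_one, eq_comm] at h1

end IdealClass

section IdealClassKer

open Ideal

variable {d : ℤ} [IsDedekindDomain (ℤ√d)]

lemma ker_ne_bot_iff {n : ℕ} (f : ℤ√d →+* ZMod n) : RingHom.ker f ≠ ⊥ ↔ n ≠ 0 := by
  rw [Ne, ← absNorm_eq_zero_iff, absNorm_ker]

lemma exists_idealClass_ker_eq (c : ClassGroup (ℤ√d)) {M : ℕ} (hM : M ≠ 0) :
    ∃ (n : ℕ) (f : ℤ√d →+* ZMod n), n ≠ 0 ∧ n.Coprime M ∧ idealClass (RingHom.ker f) = c := by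
  have hM' : span {(M : ℤ√d)} ≠ ⊥ := span_singleton_eq_bot.not.mpr (Nat.cast_ne_zero.mpr hM)
  obtain ⟨I, hI, hIc, hIM⟩ := exists_idealClass_eq_and_sup_eq_top c hM'
  obtain ⟨m, n, f, rfl⟩ := exists_eq_span_mul_ker I
  have hm : span {(m : ℤ√d)} ≠ ⊥ := left_ne_zero_of_mul hI
  have hf : RingHom.ker f ≠ ⊥ := right_ne_zero_of_mul hI
  rw [idealClass_mul hm hf, idealClass_span_singleton, one_mul] at hIc
  refine ⟨n, f, (ker_ne_bot_iff f).mp hf, ?_, hIc⟩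
  obtain ⟨a, ha, b, hb, hab⟩ := Submodule.mem_sup.mp ((eq_top_iff_one _).mp hIM)
  obtain ⟨b, rfl⟩ := mem_span_singleton.mp hb
  have hf1 : f (a + M * b) = f 1 := congrArg f hab
  have ha0 : f a = 0 := Ideal.mul_le_right ha
  rw [map_add, ha0, zero_add, map_mul, map_natCast, map_one] at hf1
  exact ((ZMod.isUnit_iff_coprime M n).mp (.of_mul_eq_one _ hf1)).symm

end IdealClassKer

/-! ### Groups with at most two elements of order dividing two -/

section CyclicTwoTorsion

variable {G : Type*} [CommGroup G] {c : G}

lemma mem_zpowers_of_sq_mem_zpowers (hc : ∀ g : G, g ^ 2 = 1 → g = 1 ∨ g = c) {x g : G}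
    (hx : ¬IsSquare x) (hcx : c ∈ Subgroup.zpowers x) (hg : g ^ 2 ∈ Subgroup.zpowers x) :
    g ∈ Subgroup.zpowers x := by
  obtain ⟨j, hj : x ^ j = g ^ 2⟩ := hg
  obtain ⟨i, rfl⟩ | ⟨i, rfl⟩ := j.even_or_odd
  · have hgi : g * (x ^ i)⁻¹ ∈ Subgroup.zpowers x := by
      rcases hc (g * (x ^ i)⁻¹) (by rw [mul_pow, ← hj]; group) with h | h <;> rw [h]
      exacts [one_mem _, hcx]
    exact (Subgroup.mul_mem_cancel_right _ (inv_mem (Subgroup.zpow_mem_zpowers x i))).mp hgi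
  · refine absurd ⟨g * (x ^ i)⁻¹, ?_⟩ hx
    rw [← sq, mul_pow, ← hj]
    group

variable [Finite G]

lemma isSquare_mul_of_not_isSquare (hc : ∀ g : G, g ^ 2 = 1 → g = 1 ∨ g = c) {x y : G}
    (hx : ¬IsSquare x) (hy : ¬IsSquare y) : IsSquare (x * y) := by
  have hmem (g : G) : g ∈ (powMonoidHom 2 : G →* G).range ↔ IsSquare g := by
    simp only [isSquare_iff_exists_sq, MonoidHom.mem_range, powMonoidHom_apply, eq_comm]
  have hle : (powMonoidHom 2 : G →* G).range.index ≤ 2 := by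
    have hker : ((powMonoidHom 2 : G →* G).ker : Set G) ⊆ {1, c} := fun g hg ↦ hc g hg
    rw [Subgroup.index_range]
    calc Nat.card (powMonoidHom 2 : G →* G).ker
        = ((powMonoidHom 2 : G →* G).ker : Set G).ncard := Nat.card_coe_set_eq _
      _ ≤ ({1, c} : Set G).ncard := Set.ncard_le_ncard hker
      _ ≤ 2 := (Set.ncard_insert_le _ _).trans (by rw [Set.ncard_singleton])
  have h1 : (powMonoidHom 2 : G →* G).range.index ≠ 1 := by
    rw [Ne, Subgroup.index_eq_one]
    exact fun h ↦ hx ((hmem x).mp (h ▸ Subgroup.mem_top x))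
  have h2 : (powMonoidHom 2 : G →* G).range.index = 2 := by
    have := Subgroup.index_ne_zero_of_finite (H := (powMonoidHom 2 : G →* G).range)
    lia
  rw [← hmem, Subgroup.mul_mem_iff_of_index_two h2, hmem, hmem]
  exact iff_of_false hx hy

lemma two_pow_dvd_card_iff_isSquare (hc : ∀ g : G, g ^ 2 = 1 → g = 1 ∨ g = c) {x : G} {k : ℕ}
    (hx : orderOf x = 2 ^ (k + 1)) : 2 ^ (k + 2) ∣ Nat.card G ↔ IsSquare x := by
  constructor
  · intro hG
    by_contra hsq
    have hx1 : x ^ 2 ^ k ≠ 1 :=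
      pow_ne_one_of_lt_orderOf (by positivity) (hx ▸ Nat.pow_lt_pow_right one_lt_two k.lt_succ_self)
    have hcx : c ∈ Subgroup.zpowers x := by
      have := hc (x ^ 2 ^ k) (by rw [← pow_mul, ← pow_succ, ← hx, pow_orderOf_eq_one])
      exact this.resolve_left hx1 ▸ Subgroup.npow_mem_zpowers x _
    have hidx : 2 ∣ Nat.card (G ⧸ Subgroup.zpowers x) := by
      rw [← (Subgroup.zpowers x).card_mul_index, Nat.card_zpowers, hx, pow_succ 2 (k + 1)] at hG
      exact Nat.dvd_of_mul_dvd_mul_left (by positivity) hG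
    obtain ⟨q, hq⟩ := exists_prime_orderOf_dvd_card' 2 hidx
    obtain ⟨g, rfl⟩ := QuotientGroup.mk_surjective q
    rw [orderOf_eq_prime_iff, ← QuotientGroup.mk_pow, Ne, QuotientGroup.eq_one_iff,
      QuotientGroup.eq_one_iff] at hq
    exact hq.2 (mem_zpowers_of_sq_mem_zpowers hc hsq hcx hq.1)
  · rintro ⟨t, rfl⟩
    have ht : orderOf t = 2 ^ (k + 2) := by
      rw [← sq] at hx
      refine orderOf_eq_prime_pow (fun h ↦ ?_) ?_
      · rw [pow_succ', pow_mul] at h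
        exact pow_ne_one_of_lt_orderOf (by positivity)
          (hx ▸ Nat.pow_lt_pow_right one_lt_two k.lt_succ_self) h
      · rw [pow_succ', pow_mul, ← hx, pow_orderOf_eq_one]
    exact ht ▸ orderOf_dvd_natCard t

end CyclicTwoTorsion

/-! ### Ambiguous classes -/

section Ambiguous

open Zsqrtd (sqrtd)
open Ideal

variable {d : ℤ}

lemma dvd_two_mul_of_conjIdeal_ker_eq {n : ℕ} {f : ℤ√d →+* ZMod n} {r : ℤ} (hf : f sqrtd = r)
    (h : conjIdeal (RingHom.ker f) = RingHom.ker f) : (n : ℤ) ∣ 2 * r := by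
  have hmem : star (sqrtd - (r : ℤ√d)) ∈ RingHom.ker f := by
    rw [← mem_conjIdeal, h, mem_ker_iff_dvd hf]
    simp
  rw [mem_ker_iff_dvd hf] at hmem
  have hre : (star (sqrtd - (r : ℤ√d))).re + (star (sqrtd - (r : ℤ√d))).im * r = -(2 * r) := by
    simp only [Zsqrtd.re_star, Zsqrtd.im_star, Zsqrtd.re_sub, Zsqrtd.im_sub, Zsqrtd.re_sqrtd,
      Zsqrtd.im_sqrtd, Zsqrtd.re_intCast, Zsqrtd.im_intCast]
    ring
  rwa [hre, dvd_neg] at hmem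

variable [IsDedekindDomain (ℤ√d)]

lemma exists_conjIdeal_eq_of_sq_eq_one (hd : d ≤ 0) {c : ClassGroup (ℤ√d)} (hc : c ^ 2 = 1) :
    ∃ A : Ideal (ℤ√d), A ≠ ⊥ ∧ conjIdeal A = A ∧ idealClass A = c := by
  obtain ⟨n, f, hn, -, rfl⟩ := exists_idealClass_ker_eq c one_ne_zero
  have hI := (ker_ne_bot_iff f).mpr hn
  have hconj := ker_mul_conjIdeal_ker f hn
  have hN := absNorm_ker f
  set I := RingHom.ker f
  rw [sq, ← idealClass_mul hI hI, idealClass_eq_one_iff] at hc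
  obtain ⟨γ, hγ⟩ := hc
  have hγ0 : span {γ} ≠ ⊥ := hγ ▸ mul_ne_zero hI hI
  have hγN : γ * star γ = n * n := by
    have h : γ.norm.natAbs = n * n := by rw [← absNorm_span_zsqrtd, ← hγ, map_mul, hN]
    rw [← Zsqrtd.norm_eq_mul_conj, ← Int.natAbs_of_nonneg (Zsqrtd.norm_nonneg hd γ), h]
    push_cast
    rfl
  -- Hilbert 90: `γ / n` has norm one, hence equals `β / star β` for `β = n + γ`, unless `β = 0`.
  rcases eq_or_ne ((n : ℤ√d) + γ) 0 with hβ | hβ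
  · have hγn : span {γ} = span {(n : ℤ√d)} := by
      rw [← span_singleton_neg, neg_eq_of_add_eq_zero_left hβ]
    exact ⟨I, hI, mul_left_cancel₀ hI (hconj.trans (hγn ▸ hγ.symm)), rfl⟩
  set β := (n : ℤ√d) + γ with hβdef
  have hβ' : span {star β} ≠ ⊥ := span_singleton_eq_bot.not.mpr (star_ne_zero.mpr hβ)
  refine ⟨span {star β} * I, mul_ne_zero hβ' hI, mul_left_cancel₀ hγ0 ?_, ?_⟩
  · have hβγ : γ * star β = n * β := by
      rw [hβdef, star_add, star_natCast]
      linear_combination hγN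
    calc span {γ} * conjIdeal (span {star β} * I)
        = span {β} * (I * conjIdeal I) * I := by
          rw [conjIdeal_mul, conjIdeal_span_singleton, star_star, ← hγ]
          ring
      _ = span {γ} * (span {star β} * I) := by
          rw [hconj, ← mul_assoc (span {γ}), span_singleton_mul_span_singleton,
            span_singleton_mul_span_singleton, hβγ, mul_comm β]
  · rw [idealClass_mul hβ' hI, idealClass_span_singleton, one_mul]

lemma exists_conjIdeal_ker_eq_of_sq_eq_one (hd : d ≤ 0) {c : ClassGroup (ℤ√d)} (hc : c ^ 2 = 1) :
    ∃ (n : ℕ) (f : ℤ√d →+* ZMod n), conjIdeal (RingHom.ker f) = RingHom.ker f ∧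
      idealClass (RingHom.ker f) = c := by
  obtain ⟨A, hA, hAconj, rfl⟩ := exists_conjIdeal_eq_of_sq_eq_one hd hc
  obtain ⟨m, n, f, rfl⟩ := exists_eq_span_mul_ker A
  have hm : span {(m : ℤ√d)} ≠ ⊥ := left_ne_zero_of_mul hA
  have hf : RingHom.ker f ≠ ⊥ := right_ne_zero_of_mul hA
  rw [conjIdeal_mul, conjIdeal_span_singleton, star_intCast] at hAconj
  refine ⟨n, f, mul_left_cancel₀ hm hAconj, ?_⟩
  rw [idealClass_mul hm hf, idealClass_span_singleton, one_mul]

lemma ker_eq_span_singleton {n : ℕ} {f : ℤ√d →+* ZMod n} {a : ℤ√d} (ha : a ∈ RingHom.ker f)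
    (hN : a.norm.natAbs = n) (hn : n ≠ 0) : RingHom.ker f = span {a} := by
  have hNa : absNorm (span {a}) = n := by rw [absNorm_span_zsqrtd, hN]
  exact (eq_of_le_of_absNorm_eq ((span_singleton_le_iff_mem _).mpr ha)
    (by rw [hNa, absNorm_ker]) (by rwa [hNa])).symm

end Ambiguous

section NegTwoMul

open Zsqrtd (sqrtd)
open Ideal

variable {p : ℕ}

lemma dvd_of_dvd_two_mul_of_dvd_sq_add (hp : Odd p) {n : ℕ} {r : ℤ} (h2 : (n : ℤ) ∣ 2 * r)
    (h : (n : ℤ) ∣ r ^ 2 + 2 * p) : (n : ℤ) ∣ r := by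
  obtain ⟨m, rfl⟩ | hn := n.even_or_odd
  · rw [← two_mul, Nat.cast_mul, Nat.cast_two] at h2 h ⊢
    obtain ⟨k, rfl⟩ := (mul_dvd_mul_iff_left two_ne_zero).mp h2
    have hr : Even ((m : ℤ) * k) := by
      obtain ⟨j, hj⟩ := dvd_of_mul_right_dvd h
      exact (Int.even_pow' two_ne_zero).mp ⟨j - p, by linear_combination hj⟩
    rw [mul_comm]
    refine mul_dvd_mul_left (m : ℤ) ((Int.even_mul.mp hr).resolve_left ?_).two_dvd
    rintro ⟨m', hm'⟩
    obtain ⟨j, hj⟩ := h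
    obtain ⟨p', rfl⟩ := hp
    rw [hm'] at hj
    push_cast at hj
    have : 4 * (m' ^ 2 * k ^ 2 + p' - m' * j) = -2 := by linear_combination hj
    lia
  · exact (Nat.isCoprime_iff_coprime.mpr (Nat.coprime_two_right.mpr hn)).dvd_of_dvd_mul_left h2

lemma map_sqrtd_eq_zero (f : ℤ√(-2 * p) →+* ZMod 2) : f sqrtd = 0 := by
  have h := congrArg f (Zsqrtd.dmuld (d := -2 * p))
  rw [map_mul, map_intCast, (ZMod.intCast_zmod_eq_zero_iff_dvd _ 2).mpr ⟨-p, by simp⟩] at h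
  exact mul_self_eq_zero.mp h

lemma exists_zsqrtd_hom_two : ∃ f : ℤ√(-2 * p) →+* ZMod 2, f sqrtd = (0 : ℤ) :=
  exists_zsqrtd_hom ⟨p, by push_cast; ring⟩

variable [IsDedekindDomain (ℤ√(-2 * p))]

lemma idealClass_ker_two_sq (f : ℤ√(-2 * p) →+* ZMod 2) : idealClass (RingHom.ker f) ^ 2 = 1 := by
  have hf := (ker_ne_bot_iff f).mpr two_ne_zero
  have hconj : conjIdeal (RingHom.ker f) = RingHom.ker f := by
    rw [conjIdeal_ker]
    congr 1
    apply Zsqrtd.hom_ext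
    rw [map_sqrtd_eq_zero, map_sqrtd_eq_zero]
  rw [sq, ← idealClass_mul hf hf]
  nth_rw 2 [← hconj]
  rw [ker_mul_conjIdeal_ker f two_ne_zero, idealClass_span_singleton]

lemma idealClass_ker_two_ne_one (hp : 1 < p) (f : ℤ√(-2 * p) →+* ZMod 2) :
    idealClass (RingHom.ker f) ≠ 1 := by
  rw [Ne, idealClass_eq_one_iff]
  rintro ⟨a, ha⟩
  have hN : a.norm = 2 := by
    rw [← Int.natAbs_of_nonneg (Zsqrtd.norm_nonneg (by simp) a), ← absNorm_span_zsqrtd, ← ha,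
      absNorm_ker, Nat.cast_two]
  rw [Zsqrtd.norm_def] at hN
  have him : a.im = 0 := by
    by_contra h
    have := Int.one_le_abs h
    nlinarith [mul_self_nonneg a.re, sq_abs a.im]
  rw [him, mul_zero, sub_zero] at hN
  exact Int.prime_two.irreducible.not_isSquare ⟨a.re, hN.symm⟩

lemma idealClass_ker_of_map_sqrtd_eq_zero (hp : p.Prime) {n : ℕ} {f : ℤ√(-2 * p) →+* ZMod n}
    (hf : f sqrtd = 0) (f₂ : ℤ√(-2 * p) →+* ZMod 2) :
    idealClass (RingHom.ker f) = 1 ∨ idealClass (RingHom.ker f) = idealClass (RingHom.ker f₂) := by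
  have hf0 : f sqrtd = (0 : ℤ) := by rw [hf, Int.cast_zero]
  have hn2p : n ∣ 2 * p := by
    zify
    simpa using dvd_sq_sub_of_zsqrtd_hom hf0
  obtain ⟨k, l, hk, hl, rfl⟩ := (Nat.dvd_mul).mp hn2p
  obtain rfl | rfl := (Nat.dvd_prime Nat.prime_two).mp hk <;>
    obtain rfl | rfl := ((Nat.dvd_prime hp).mp hl).imp_right Eq.symm
  · left
    rw [idealClass_eq_one_iff]
    exact ⟨1, ker_eq_span_singleton ((mem_ker_iff_dvd hf0).mpr (one_dvd _)) (by simp) (by simp)⟩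
  · right
    obtain ⟨g, hg⟩ : ∃ g : ℤ√(-2 * p) →+* ZMod (1 * p * 2), g sqrtd = (0 : ℤ) :=
      exists_zsqrtd_hom ⟨1, by push_cast; ring⟩
    have hg1 : idealClass (RingHom.ker g) = 1 := by
      refine idealClass_eq_one_iff.mpr ⟨sqrtd, ker_eq_span_singleton ?_ ?_ (by simp [hp.ne_zero])⟩
      · rw [RingHom.mem_ker, hg, Int.cast_zero]
      · simp [Zsqrtd.norm_def, Int.natAbs_mul, mul_comm]
    have hn : 1 * p ≠ 0 := by simp [hp.ne_zero]
    rw [← ker_mul_ker hf0 (g := f₂) (by rw [map_sqrtd_eq_zero, Int.cast_zero]) hg hn two_ne_zero,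
      idealClass_mul ((ker_ne_bot_iff f).mpr hn) ((ker_ne_bot_iff f₂).mpr two_ne_zero)] at hg1
    rw [eq_inv_of_mul_eq_one_left hg1, inv_eq_iff_mul_eq_one, ← sq, idealClass_ker_two_sq]
  · right
    congr 2
    exact Zsqrtd.hom_ext _ _ (by rw [map_sqrtd_eq_zero, map_sqrtd_eq_zero])
  · left
    rw [idealClass_eq_one_iff]
    exact ⟨sqrtd, ker_eq_span_singleton hf (by simp [Zsqrtd.norm_def, Int.natAbs_mul])
      (by simp [hp.ne_zero])⟩

lemma eq_one_or_eq_idealClass_ker_two (hp : p.Prime) (hodd : Odd p) (f₂ : ℤ√(-2 * p) →+* ZMod 2)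
    (c : ClassGroup (ℤ√(-2 * p))) (hc : c ^ 2 = 1) : c = 1 ∨ c = idealClass (RingHom.ker f₂) := by
  obtain ⟨n, f, hconj, rfl⟩ := exists_conjIdeal_ker_eq_of_sq_eq_one (by simp) hc
  obtain ⟨r, hr⟩ := ZMod.intCast_surjective (f sqrtd)
  refine idealClass_ker_of_map_sqrtd_eq_zero hp ?_ f₂
  rw [← hr, ZMod.intCast_zmod_eq_zero_iff_dvd]
  exact dvd_of_dvd_two_mul_of_dvd_sq_add hodd (dvd_two_mul_of_conjIdeal_ker_eq hr.symm hconj)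
    (by simpa using dvd_sq_sub_of_zsqrtd_hom hr.symm)

end NegTwoMul

/-! ### Genus theory -/

section Representation

lemma exists_sq_lt_sq_le_dvd_sub_mul {n : ℕ} (hn : 0 < n) (r : ℤ) :
    ∃ x y : ℤ, 0 < y ∧ x ^ 2 < n ∧ y ^ 2 ≤ n ∧ (n : ℤ) ∣ x - r * y := by
  obtain ⟨j, y, hy0, hy, hle⟩ := Real.exists_int_int_abs_mul_sub_le (r / n) (Nat.sqrt_pos.mpr hn)
  have hn' : (0 : ℝ) < n := by exact_mod_cast hn
  have hsq : (n : ℝ) < (n.sqrt + 1) ^ 2 := by exact_mod_cast Nat.lt_succ_sqrt' n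
  refine ⟨r * y - n * j, y, hy0, ?_, ?_, -j, by ring⟩
  · have habs : |(r * y - n * j : ℝ)| ≤ n / (n.sqrt + 1) := by
      have hxy : (r * y - n * j : ℝ) = n * (y * (r / n) - j) := by field_simp
      rw [hxy, abs_mul, abs_of_pos hn', div_eq_mul_one_div (n : ℝ) (n.sqrt + 1)]
      exact mul_le_mul_of_nonneg_left hle hn'.le
    have hx : (r * y - n * j : ℝ) ^ 2 < n := calc
      (r * y - n * j : ℝ) ^ 2 = |(r * y - n * j : ℝ)| ^ 2 := (sq_abs _).symm
      _ ≤ (n / (n.sqrt + 1)) ^ 2 := by gcongr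
      _ < n := by
        rw [div_pow, div_lt_iff₀ (by positivity), sq (n : ℝ)]
        exact mul_lt_mul_of_pos_left hsq hn'
    exact_mod_cast hx
  · calc y ^ 2 ≤ (n.sqrt : ℤ) ^ 2 := by gcongr
      _ ≤ (n : ℤ) := by exact_mod_cast Nat.sqrt_le' n

lemma exists_eq_sq_sub_two_mul_sq {p : ℕ} (hp : p.Prime) (h2 : IsSquare (2 : ZMod p)) :
    ∃ u v : ℕ, (p : ℤ) = u ^ 2 - 2 * v ^ 2 := by
  obtain ⟨r', hr'⟩ := h2
  obtain ⟨r, rfl⟩ := ZMod.intCast_surjective r'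
  obtain ⟨x, y, hy0, hx, hy, hxy⟩ := exists_sq_lt_sq_le_dvd_sub_mul hp.pos r
  obtain ⟨c, hc⟩ : (p : ℤ) ∣ x ^ 2 - 2 * y ^ 2 := by
    rw [← ZMod.intCast_zmod_eq_zero_iff_dvd] at hxy ⊢
    push_cast at hxy ⊢
    linear_combination (x + r * y : ZMod p) * hxy - (y : ZMod p) ^ 2 * hr'
  have hyp : y ^ 2 ≠ p := fun h ↦ hp.prime.irreducible.not_isSquare
    ⟨y.natAbs, by zify; rw [← h, abs_mul_abs_self, sq]⟩
  have hp0 : (0 : ℤ) < p := by exact_mod_cast hp.pos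
  have hc0 : c ≠ 0 := by
    rintro rfl
    have hxy2 : x ^ 2 = y ^ 2 * 2 := by linear_combination hc
    obtain ⟨t, rfl⟩ : y ∣ x := (Int.pow_dvd_pow_iff two_ne_zero).mp ⟨2, hxy2⟩
    rw [mul_pow] at hxy2
    exact Int.prime_two.irreducible.not_isSquare
      ⟨t, by rw [← sq, mul_left_cancel₀ (pow_ne_zero 2 hy0.ne') hxy2]⟩
  have hc1 : c < 1 := by nlinarith [hp0]
  have hc2 : -2 < c := by nlinarith [hp0, hy.lt_of_ne hyp]
  obtain rfl : c = -1 := by lia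
  refine ⟨(x + 2 * y).natAbs, (x + y).natAbs, ?_⟩
  rw [Int.natCast_natAbs, Int.natCast_natAbs, sq_abs, sq_abs]
  linear_combination hc

end Representation

section PrimeOfNegCharacter

open NumberTheorySymbols

lemma exists_prime_mod_eight_eq_three_and_dvd {p : ℕ} (hp : p % 4 = 3) :
    ∃ q : ℕ, q.Prime ∧ q % 8 = 3 ∧ ∃ r : ℤ, (q : ℤ) ∣ r ^ 2 + 2 * p := by
  have hcop : IsCoprime (4 * p - 1 : ℤ) ((8 * p : ℕ) : ℤ) :=
    ⟨-4 * p - 1, 2 * p, by push_cast; ring⟩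
  obtain ⟨q, -, hq, hq8p⟩ :=
    Nat.forall_exists_prime_gt_and_zmodEq 0 (show 8 * p ≠ 0 by lia) hcop
  push_cast at hq8p
  have hq8 : q % 8 = 3 := by
    have := hq8p.of_mul_right
    unfold Int.ModEq at this
    lia
  have hqp : J(q | p) = -1 := calc
    J(q | p) = J(-1 | p) := jacobiSym.mod_left' <|
      hq8p.of_mul_left.trans (Int.modEq_iff_dvd.mpr ⟨-4, by ring⟩)
    _ = -1 := by
      rw [jacobiSym.at_neg_one (Nat.odd_iff.mpr (by lia)), ZMod.χ₄_nat_three_mod_four (by lia)]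
  have hpq : J(p | q) = 1 := by
    rw [jacobiSym.quadratic_reciprocity_three_mod_four (by lia) (by lia), hqp, neg_neg]
  have hq2 : J(-2 | q) = 1 := by
    rw [jacobiSym.at_neg_two (Nat.odd_iff.mpr (by lia)), ZMod.χ₈'_nat_eq_if_mod_eight, hq8]
    simp [show q % 2 = 1 by lia]
  have : Fact q.Prime := ⟨hq⟩
  obtain ⟨z, hz⟩ : IsSquare ((-2 * p : ℤ) : ZMod q) :=
    ZMod.isSquare_of_jacobiSym_eq_one (by rw [jacobiSym.mul_left, hq2, hpq, one_mul])
  obtain ⟨r, rfl⟩ := ZMod.intCast_surjective z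
  refine ⟨q, hq, hq8, r, (ZMod.intCast_zmod_eq_zero_iff_dvd _ q).mp ?_⟩
  push_cast at hz ⊢
  linear_combination -hz

end PrimeOfNegCharacter

section GenusCharacter

open Zsqrtd (sqrtd)
open Ideal

variable {p : ℕ}

lemma χ₈_norm (hp : p % 4 = 3) {z : ℤ√(-2 * p)} (hz : Odd z.norm.natAbs) :
    ZMod.χ₈ z.norm.natAbs = 1 := by
  rw [Int.natAbs_odd] at hz
  have hN : z.norm.natAbs = z.norm := Int.natAbs_of_nonneg (Zsqrtd.norm_nonneg (by simp) z)
  have hnorm : z.norm = z.re ^ 2 + 2 * (p * z.im ^ 2) := by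
    rw [Zsqrtd.norm_def]
    ring
  have hre : Odd z.re := by
    rw [hnorm, Int.odd_add, Int.odd_pow' two_ne_zero] at hz
    exact hz.mpr (even_two_mul _)
  have hre8 := Int.eight_dvd_sq_sub_one_of_odd hre
  have hmod : z.norm % 8 = 1 ∨ z.norm % 8 = 7 := by
    have hp4 : (p : ℤ) % 4 = 3 := by lia
    have him4 : (p * z.im ^ 2 : ℤ) % 4 = 0 ∨ (p * z.im ^ 2 : ℤ) % 4 = 3 := by
      rcases z.im.even_or_odd with ⟨m, hm⟩ | him
      · left
        rw [hm, ← two_mul, mul_pow]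
        exact Int.emod_eq_zero_of_dvd ⟨p * m ^ 2, by ring⟩
      · right
        rw [Int.mul_emod, hp4, Int.sq_mod_four_eq_one_of_odd him]
        rfl
    lia
  have h : ZMod.χ₈ (z.norm : ZMod 8) = 1 := by
    rw [ZMod.χ₈_int_eq_if_mod_eight, if_neg (by lia), if_pos hmod]
  rwa [← hN, Int.cast_natCast] at h

lemma exists_zsqrtd_hom_χ₈_eq_neg_one (hp : p % 4 = 3) :
    ∃ (q : ℕ) (_ : ℤ√(-2 * p) →+* ZMod q), Odd q ∧ ZMod.χ₈ q = -1 := by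
  obtain ⟨q, -, hq8, r, hr⟩ := exists_prime_mod_eight_eq_three_and_dvd hp
  obtain ⟨g, -⟩ : ∃ g : ℤ√(-2 * p) →+* ZMod q, g sqrtd = r :=
    exists_zsqrtd_hom (by simpa using hr)
  refine ⟨q, g, Nat.odd_iff.mpr (by lia), ?_⟩
  rw [ZMod.χ₈_nat_eq_if_mod_eight, if_neg (by lia), if_neg (by lia)]

variable [IsDedekindDomain (ℤ√(-2 * p))]

lemma χ₈_absNorm_of_isSquare (hp : p % 4 = 3) {I : Ideal (ℤ√(-2 * p))} (hI : Odd I.absNorm)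
    (h : IsSquare (idealClass I)) : ZMod.χ₈ I.absNorm = 1 := by
  obtain ⟨t, ht⟩ := h
  obtain ⟨n, f, hn, hn2, hf⟩ := exists_idealClass_ker_eq t⁻¹ two_ne_zero
  have hnodd : Odd n := Nat.coprime_two_right.mp hn2
  have hI0 : I ≠ ⊥ := by
    rintro rfl
    simp at hI
  have hf0 := (ker_ne_bot_iff f).mpr hn
  obtain ⟨a, ha⟩ : ∃ a, I * (RingHom.ker f * RingHom.ker f) = span {a} := by
    rw [← idealClass_eq_one_iff, idealClass_mul hI0 (mul_ne_zero hf0 hf0), idealClass_mul hf0 hf0,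
      ht, hf]
    group
  have hN : I.absNorm * n ^ 2 = a.norm.natAbs := by
    rw [← absNorm_span_zsqrtd, ← ha, map_mul, map_mul, absNorm_ker, sq]
  have hχ := χ₈_norm hp (hN ▸ hI.mul hnodd.pow)
  have hn1 : ZMod.χ₈ n ^ 2 = 1 := by
    rw [← MulChar.pow_apply' _ two_ne_zero, ZMod.isQuadratic_χ₈.sq_eq_one,
      MulChar.one_apply ((ZMod.isUnit_iff_coprime n 8).mpr (hn2.pow_right 3))]
  rwa [← hN, Nat.cast_mul, Nat.cast_pow, map_mul, map_pow, hn1, mul_one] at hχ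

lemma isSquare_idealClass_iff [Finite (ClassGroup (ℤ√(-2 * p)))] (hp : p.Prime) (hp4 : p % 4 = 3)
    {I : Ideal (ℤ√(-2 * p))} (hI : Odd I.absNorm) :
    IsSquare (idealClass I) ↔ ZMod.χ₈ I.absNorm = 1 := by
  refine ⟨χ₈_absNorm_of_isSquare hp4 hI, not_imp_not.mp fun hsq hχ ↦ ?_⟩
  obtain ⟨f₂, -⟩ := exists_zsqrtd_hom_two (p := p)
  obtain ⟨q, g, hqodd, hχq⟩ := exists_zsqrtd_hom_χ₈_eq_neg_one hp4
  have hgsq : ¬IsSquare (idealClass (RingHom.ker g)) := fun h ↦ by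
    have := χ₈_absNorm_of_isSquare hp4 (by rwa [absNorm_ker]) h
    rw [absNorm_ker, hχq] at this
    exact absurd this (by decide)
  have hI0 : I ≠ ⊥ := by
    rintro rfl
    simp at hI
  have hprod := isSquare_mul_of_not_isSquare
    (eq_one_or_eq_idealClass_ker_two hp (Nat.odd_iff.mpr (by lia)) f₂) hsq hgsq
  rw [← idealClass_mul hI0 ((ker_ne_bot_iff g).mpr hqodd.pos.ne')] at hprod
  have hχIq := χ₈_absNorm_of_isSquare hp4 (by rw [map_mul, absNorm_ker]; exact hI.mul hqodd) hprod
  rw [map_mul, absNorm_ker, Nat.cast_mul, map_mul, hχ, hχq] at hχIq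
  exact absurd hχIq (by decide)

end GenusCharacter

/-! ### Reciprocity on the norm-form equation -/

section Reciprocity

open NumberTheorySymbols

lemma sq_modEq_five_sub_χ₈ {a : ℤ} (ha : Odd a) : a ^ 2 ≡ 5 - 4 * ZMod.χ₈ a [ZMOD 16] := by
  obtain ⟨k, hk⟩ : ∃ k, a = a % 8 + 8 * k := ⟨a / 8, by lia⟩
  have hsq : a ^ 2 = (a % 8) ^ 2 + 16 * (a % 8 * k + 4 * k ^ 2) := by
    conv_lhs => rw [hk]
    ring
  rw [hsq, ZMod.χ₈_int_mod_eight]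
  refine (Int.modEq_add_fac_self.trans ?_)
  have h8 : a % 8 = 1 ∨ a % 8 = 3 ∨ a % 8 = 5 ∨ a % 8 = 7 := by
    have := Int.odd_iff.mp ha
    lia
  rcases h8 with h | h | h | h <;> rw [h] <;> decide

lemma χ₈_eq_one_or_neg_one {a : ℤ} (ha : Odd a) : ZMod.χ₈ a = 1 ∨ ZMod.χ₈ a = -1 := by
  rw [ZMod.χ₈_int_eq_if_mod_eight, if_neg (by rw [Int.odd_iff.mp ha]; decide)]
  exact ite_eq_or_eq _ _ _

lemma χ₄_eq_one_or_neg_one {a : ℤ} (ha : Odd a) : ZMod.χ₄ a = 1 ∨ ZMod.χ₄ a = -1 := by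
  rw [ZMod.χ₄_int_eq_if_mod_four, if_neg (by rw [Int.odd_iff.mp ha]; decide)]
  exact ite_eq_or_eq _ _ _

lemma jacobiSym_two_natAbs {a : ℤ} (ha : Odd a) : J(2 | a.natAbs) = ZMod.χ₈ a := by
  rw [jacobiSym.at_two (Int.natAbs_odd.mpr ha)]
  obtain h | h := a.natAbs_eq
  · rw [← Int.cast_natCast, ← h]
  · have hodd : ∀ x : ZMod 8, ZMod.χ₈ (-x) = ZMod.χ₈ x := by decide
    rw [h, Int.natAbs_neg, Int.natAbs_natCast, Int.cast_neg, hodd, Int.cast_natCast]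

lemma modEq_χ₄ {a : ℤ} (ha : Odd a) : a ≡ ZMod.χ₄ a [ZMOD 4] := by
  obtain h | h : a % 4 = 1 ∨ a % 4 = 3 := by
    have := Int.odd_iff.mp ha
    lia
  · rw [ZMod.χ₄_int_one_mod_four h]
    exact h
  · rw [ZMod.χ₄_int_three_mod_four h]
    exact h

lemma jacobiSym_eq_of_mod_four_eq_one {n : ℕ} (hn : n % 4 = 1) {a : ℤ} (ha : Odd a) :
    J(a | n) = J(n | a.natAbs) := by
  have hnodd : Odd n := Nat.odd_iff.mpr (by lia)
  rw [jacobiSym.quadratic_reciprocity_one_mod_four hn (Int.natAbs_odd.mpr ha)]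
  obtain h | h := a.natAbs_eq
  · rw [← h]
  · conv_lhs => rw [h]
    rw [jacobiSym.neg _ hnodd, ZMod.χ₄_nat_one_mod_four hn, one_mul]

lemma jacobiSym_eq_of_mod_four_eq_three {n : ℕ} (hn : n % 4 = 3) {a : ℤ} (ha : Odd a) :
    J(a | n) = ZMod.χ₄ a * J(n | a.natAbs) := by
  have hnodd : Odd n := Nat.odd_iff.mpr (by lia)
  have habs : J((a.natAbs : ℤ) | n) = ZMod.χ₄ (a.natAbs : ℤ) * J(n | a.natAbs) := by
    rcases Nat.odd_mod_four_iff.mp (Nat.odd_iff.mp (Int.natAbs_odd.mpr ha)) with h | h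
    · rw [Int.cast_natCast, ZMod.χ₄_nat_one_mod_four h, one_mul,
        jacobiSym.quadratic_reciprocity_one_mod_four h hnodd]
    · rw [Int.cast_natCast, ZMod.χ₄_nat_three_mod_four h, neg_one_mul,
        jacobiSym.quadratic_reciprocity_three_mod_four h hn]
  obtain h | h := a.natAbs_eq
  · rwa [← h] at habs
  · have hneg : ∀ x : ZMod 4, ZMod.χ₄ (-x) = -ZMod.χ₄ x := by decide
    rw [h, Int.natAbs_neg, Int.natAbs_natCast, jacobiSym.neg _ hnodd, habs,
      ZMod.χ₄_nat_three_mod_four hn, Int.cast_neg, hneg]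
    ring

lemma jacobiSym_eq_one_of_mod_eight_eq_one {n : ℕ} (hn : n % 8 = 1) {a : ℤ}
    (h : ∀ m : ℕ, Odd m → (m : ℤ) ∣ a → J(n | m) = 1) : J(a | n) = 1 := by
  have hnodd : Odd n := Nat.odd_iff.mpr (by lia)
  rcases eq_or_ne a 0 with rfl | ha
  · rw [← h n hnodd (dvd_zero _), jacobiSym.mod_left (n : ℤ), Int.emod_self]
  obtain ⟨b, hb, hab⟩ := (Int.finiteMultiplicity_iff (a := 2) (b := a)).mpr ⟨by simp, ha⟩
    |>.exists_eq_pow_mul_and_not_dvd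
  have hbodd : Odd b := Int.not_even_iff_odd.mp (even_iff_two_dvd.not.mpr hab)
  have h2 : J(2 | n) = 1 := by
    rw [jacobiSym.at_two hnodd, ZMod.χ₈_nat_mod_eight, hn]
    rfl
  rw [hb, jacobiSym.mul_left, jacobiSym.pow_left, h2, one_pow, one_mul,
    jacobiSym_eq_of_mod_four_eq_one (by lia) hbodd]
  exact h _ (Int.natAbs_odd.mpr hbodd) (Int.natAbs_dvd.mpr (hb ▸ dvd_mul_left _ _))

lemma jacobiSym_eq_one_of_dvd_sq_sub {m : ℕ} {w a r : ℤ} (hw : IsCoprime w m)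
    (h : (m : ℤ) ∣ w ^ 2 - a * r ^ 2) : J(a | m) = 1 := by
  have har : J(a | m) * J(r | m) ^ 2 = 1 := by
    rw [← jacobiSym.pow_left, ← jacobiSym.mul_left, jacobiSym.mod_left' (Int.modEq_iff_dvd.mpr h),
      jacobiSym.sq_one' (Int.isCoprime_iff_gcd_eq_one.mp hw)]
  rcases jacobiSym.trichotomy r m with hr | hr | hr <;> rw [hr] at har
  · exact absurd har (by norm_num)
  · linear_combination har
  · linear_combination har

section QuadraticForm

variable {u v w : ℕ} {s y : ℤ}
  (hform : (w : ℤ) ^ 2 = u * s ^ 2 + 4 * v * s * y + 2 * u * y ^ 2)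

include hform

lemma isCoprime_mul_of_sq_eq (hwu : IsCoprime (w : ℤ) u) : IsCoprime (u : ℤ) (v * s * y) := by
  have h : IsCoprime (u : ℤ) (4 * (v * s * y) + u * (s ^ 2 + 2 * y ^ 2)) := by
    convert hwu.symm.pow_right (n := 2) using 1
    rw [hform]
    ring
  exact h.of_add_mul_left_right.of_mul_right_right

lemma odd_of_sq_eq (hw : Odd w) : Odd s := by
  have h : Odd ((w : ℤ) ^ 2) := ((Int.odd_coe_nat w).mpr hw).pow
  rw [show (w : ℤ) ^ 2 = u * s ^ 2 + 2 * (2 * v * s * y + u * y ^ 2) by rw [hform]; ring,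
    Int.odd_add, iff_true_right (even_two_mul _)] at h
  exact (Int.odd_pow' two_ne_zero).mp (Int.odd_mul.mp h).2

lemma isCoprime_of_sq_eq (hsy : IsCoprime s y) (hwu : IsCoprime (w : ℤ) u) (hw : Odd w) :
    IsCoprime (w : ℤ) s ∧ IsCoprime (w : ℤ) y := by
  have hu := isCoprime_mul_of_sq_eq hform hwu
  have h2 : IsCoprime s 2 := Int.isCoprime_two_right.mpr (odd_of_sq_eq hform hw)
  constructor
  · have h : IsCoprime s (2 * u * y ^ 2 + s * (u * s + 4 * v * y)) :=
      ((h2.mul_right hu.of_mul_right_left.of_mul_right_right.symm).mul_right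
        hsy.pow_right).add_mul_left_right _
    rw [show 2 * u * y ^ 2 + s * (u * s + 4 * v * y) = (w : ℤ) ^ 2 by rw [hform]; ring] at h
    exact ((IsCoprime.pow_right_iff two_pos).mp h).symm
  · have h : IsCoprime y (u * s ^ 2 + y * (4 * v * s + 2 * u * y)) :=
      (hu.of_mul_right_right.symm.mul_right hsy.symm.pow_right).add_mul_left_right _
    rw [show u * s ^ 2 + y * (4 * v * s + 2 * u * y) = (w : ℤ) ^ 2 by rw [hform]; ring] at h
    exact ((IsCoprime.pow_right_iff two_pos).mp h).symm

lemma jacobiSym_eq_one_of_sq_eq (hwu : IsCoprime (w : ℤ) u) :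
    J(v * s * y | u) = 1 :=
  jacobiSym_eq_one_of_dvd_sq_sub (r := 2) hwu
    ⟨s ^ 2 + 2 * y ^ 2, by linear_combination hform⟩

lemma jacobiSym_natAbs_eq_χ₈_of_sq_eq (hws : IsCoprime (w : ℤ) s) (hs : Odd s) :
    J(u | s.natAbs) = ZMod.χ₈ s := by
  have h : J(2 * u | s.natAbs) = 1 :=
    jacobiSym_eq_one_of_dvd_sq_sub (w := w) (r := y)
      (hws.of_isCoprime_of_dvd_right Int.natAbs_dvd_self)
      (Int.natAbs_dvd.mpr ⟨u * s + 4 * v * y, by linear_combination hform⟩)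
  rw [jacobiSym.mul_left, jacobiSym_two_natAbs hs] at h
  rcases χ₈_eq_one_or_neg_one hs with hχ | hχ <;> rw [hχ] at h ⊢ <;> linarith

lemma jacobiSym_eq_one_of_dvd_of_sq_eq (hwy : IsCoprime (w : ℤ) y) {m : ℕ} (hm : (m : ℤ) ∣ y) :
    J(u | m) = 1 :=
  jacobiSym_eq_one_of_dvd_sq_sub (r := s) (hwy.of_isCoprime_of_dvd_right hm)
    (hm.trans ⟨4 * v * s + 2 * u * y, by linear_combination hform⟩)

lemma jacobiSym_eq_of_mod_eight_eq_one (hsy : IsCoprime s y) (hwu : IsCoprime (w : ℤ) u)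
    (hw : Odd w) (hv : Odd v) (hu : u % 8 = 1) : J(u | v) = ZMod.χ₈ s := by
  have hs := odd_of_sq_eq hform hw
  obtain ⟨hws, hwy⟩ := isCoprime_of_sq_eq hform hsy hwu hw
  have h := jacobiSym_eq_one_of_sq_eq hform hwu
  have hy : J(y | u) = 1 := jacobiSym_eq_one_of_mod_eight_eq_one hu fun m _ hm ↦
    jacobiSym_eq_one_of_dvd_of_sq_eq hform hwy hm
  rw [jacobiSym.mul_left, jacobiSym.mul_left, hy,
    jacobiSym_eq_of_mod_four_eq_one (by lia) hs, jacobiSym_natAbs_eq_χ₈_of_sq_eq hform hws hs,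
    jacobiSym_eq_of_mod_four_eq_one (by lia) ((Int.odd_coe_nat v).mpr hv), Int.natAbs_natCast] at h
  rcases χ₈_eq_one_or_neg_one hs with hχ | hχ <;> rw [hχ] at h ⊢ <;> linarith

lemma jacobiSym_eq_of_mod_eight_eq_seven (hsy : IsCoprime s y) (hwu : IsCoprime (w : ℤ) u)
    (hw : Odd w) (hv : Odd v) (hy : Odd y) (hu : u % 8 = 7) :
    J(u | v) = ZMod.χ₈ s * ZMod.χ₄ (v * s * y : ℤ) := by
  have hs := odd_of_sq_eq hform hw
  obtain ⟨hws, hwy⟩ := isCoprime_of_sq_eq hform hsy hwu hw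
  have hv' := (Int.odd_coe_nat v).mpr hv
  have hodd := (hv'.mul hs).mul hy
  have h : J(u | (v * s * y).natAbs) = J(u | v) * ZMod.χ₈ s := by
    have hne {a : ℤ} (ha : Odd a) : a.natAbs ≠ 0 := (Int.natAbs_odd.mpr ha).pos.ne'
    rw [Int.natAbs_mul, jacobiSym.mul_right' _ (hne (hv'.mul hs)) (hne hy), Int.natAbs_mul,
      jacobiSym.mul_right' _ (hne hv') (hne hs), jacobiSym_natAbs_eq_χ₈_of_sq_eq hform hws hs,
      jacobiSym_eq_one_of_dvd_of_sq_eq hform hwy Int.natAbs_dvd_self, mul_one, Int.natAbs_natCast]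
  have h1 := jacobiSym_eq_one_of_sq_eq hform hwu
  rw [jacobiSym_eq_of_mod_four_eq_three (by lia) hodd, h] at h1
  rcases χ₈_eq_one_or_neg_one hs with hχ | hχ <;> rw [hχ] at h1 ⊢ <;>
    rcases χ₄_eq_one_or_neg_one hodd with h4 | h4 <;> rw [h4] at h1 ⊢ <;> linarith

lemma sq_modEq_of_even (hu : Odd u) (hv : Odd v) (hs : Odd s) (hy : Even y) :
    (w : ℤ) ^ 2 ≡ u * s ^ 2 [ZMOD 16] := by
  obtain ⟨k, rfl⟩ := hy
  have heven : Even (k * (v * s + u * k)) := by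
    rcases k.even_or_odd with hk | hk
    · exact hk.mul_right _
    · exact ((((Int.odd_coe_nat v).mpr hv).mul hs).add_odd
        (((Int.odd_coe_nat u).mpr hu).mul hk)).mul_left _
  obtain ⟨m, hm⟩ := heven.two_dvd
  exact (Int.modEq_iff_dvd.mpr ⟨m, by linear_combination hform + 8 * hm⟩).symm

lemma sq_modEq_of_odd (hv : Odd v) (hs : Odd s) (hy : Odd y) :
    (w : ℤ) ^ 2 ≡ u * s ^ 2 + 4 * ZMod.χ₄ (v * s * y : ℤ) + 2 * u [ZMOD 16] := by
  obtain ⟨m, hm⟩ := (modEq_χ₄ ((((Int.odd_coe_nat v).mpr hv).mul hs).mul hy)).dvd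
  obtain ⟨k, hk⟩ := Int.eight_dvd_sq_sub_one_of_odd hy
  exact Int.modEq_iff_dvd.mpr ⟨m - u * k, by linear_combination 4 * hm - 2 * u * hk - hform⟩

lemma χ₈_eq_mul_jacobiSym_of_even (hsy : IsCoprime s y) (hwu : IsCoprime (w : ℤ) u) (hw : Odd w)
    (hv : Odd v) (hy : Even y) {σ : ℤ} (hσ : σ = 1 ∨ σ = -1)
    (hu : u ≡ 5 - 4 * σ [ZMOD 16] ∨ u ≡ -(5 - 4 * σ) [ZMOD 16]) :
    ZMod.χ₈ w = σ * J(u | v) := by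
  have hs := odd_of_sq_eq hform hw
  have hw' := (Int.odd_coe_nat w).mpr hw
  have hχw := χ₈_eq_one_or_neg_one hw'
  have hχs := χ₈_eq_one_or_neg_one hs
  have hw2 := sq_modEq_five_sub_χ₈ hw'
  have hs2 := (sq_modEq_five_sub_χ₈ hs).mul_left u
  rw [Int.cast_natCast] at hχw hw2
  unfold Int.ModEq at hu hw2 hs2
  have h := sq_modEq_of_even hform (Nat.odd_iff.mpr (by lia)) hv hs hy
  have hJ := jacobiSym_eq_of_mod_eight_eq_one hform hsy hwu hw hv
  unfold Int.ModEq at h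
  rcases hσ with rfl | rfl <;> rcases hχw with hχw | hχw <;> rcases hχs with hχs | hχs <;>
    rw [hχw] at hw2 ⊢ <;> rw [hχs] at hs2 hJ <;> lia

lemma χ₈_eq_mul_jacobiSym_of_odd (hsy : IsCoprime s y) (hwu : IsCoprime (w : ℤ) u) (hw : Odd w)
    (hv : Odd v) (hy : Odd y) {σ : ℤ} (hσ : σ = 1 ∨ σ = -1)
    (hu : u ≡ 5 - 4 * σ [ZMOD 16] ∨ u ≡ -(5 - 4 * σ) [ZMOD 16]) :
    ZMod.χ₈ w = σ * J(u | v) := by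
  have hs := odd_of_sq_eq hform hw
  have hw' := (Int.odd_coe_nat w).mpr hw
  have hχw := χ₈_eq_one_or_neg_one hw'
  have hχs := χ₈_eq_one_or_neg_one hs
  have hχ₄ := χ₄_eq_one_or_neg_one ((((Int.odd_coe_nat v).mpr hv).mul hs).mul hy)
  have hw2 := sq_modEq_five_sub_χ₈ hw'
  have hs2 := (sq_modEq_five_sub_χ₈ hs).mul_left u
  have h := sq_modEq_of_odd hform hv hs hy
  have hJ := jacobiSym_eq_of_mod_eight_eq_seven hform hsy hwu hw hv hy
  rw [Int.cast_natCast] at hχw hw2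
  unfold Int.ModEq at hu hw2 hs2 h
  have hu8 : u % 8 = 1 ∨ u % 8 = 7 := by lia
  rcases hσ with rfl | rfl <;> rcases hχw with hχw | hχw <;> rcases hχs with hχs | hχs <;>
    rcases hχ₄ with hχ₄ | hχ₄ <;> rw [hχw] at hw2 ⊢ <;> rw [hχs] at hs2 hJ <;>
    rw [hχ₄] at h hJ <;> rcases hu8 with hu8 | hu8 <;> lia

lemma χ₈_eq_mul_jacobiSym_of_sq_eq (hsy : IsCoprime s y) (hwu : IsCoprime (w : ℤ) u) (hw : Odd w)
    (hv : Odd v) {σ : ℤ} (hσ : σ = 1 ∨ σ = -1)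
    (hu : u ≡ 5 - 4 * σ [ZMOD 16] ∨ u ≡ -(5 - 4 * σ) [ZMOD 16]) :
    ZMod.χ₈ w = σ * J(u | v) :=
  y.even_or_odd.elim (χ₈_eq_mul_jacobiSym_of_even hform hsy hwu hw hv · hσ hu)
    (χ₈_eq_mul_jacobiSym_of_odd hform hsy hwu hw hv · hσ hu)

end QuadraticForm

end Reciprocity

section SqSubTwoMulSq

open NumberTheorySymbols

variable {p u v : ℕ}

lemma odd_and_odd_of_eq_sq_sub (hp : p % 8 = 7) (h : (p : ℤ) = u ^ 2 - 2 * v ^ 2) :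
    Odd u ∧ Odd v := by
  have hu : Odd (u : ℤ) := by
    have hu2 : Odd ((u : ℤ) ^ 2) := by
      rw [← sub_add_cancel ((u : ℤ) ^ 2) (2 * v ^ 2), ← h, Int.odd_iff]
      lia
    exact (Int.odd_pow' two_ne_zero).mp hu2
  refine ⟨(Int.odd_coe_nat u).mp hu, (Int.odd_coe_nat v).mp (Int.not_even_iff_odd.mp ?_)⟩
  rintro ⟨k, hk⟩
  obtain ⟨m, hm⟩ := Int.eight_dvd_sq_sub_one_of_odd hu
  rw [hk] at h
  have : (p : ℤ) = 8 * (m - k ^ 2) + 1 := by linear_combination h + hm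
  lia

lemma χ₈_eq_one_iff_of_eq_sq_sub (hp : p % 8 = 7) (h : (p : ℤ) = u ^ 2 - 2 * v ^ 2) :
    ZMod.χ₈ u = 1 ↔ p % 16 = 15 := by
  obtain ⟨hu, hv⟩ := odd_and_odd_of_eq_sq_sub hp h
  have hu2 := sq_modEq_five_sub_χ₈ ((Int.odd_coe_nat u).mpr hu)
  have hv8 := Int.eight_dvd_sq_sub_one_of_odd ((Int.odd_coe_nat v).mpr hv)
  have hχ := χ₈_eq_one_or_neg_one ((Int.odd_coe_nat u).mpr hu)
  rw [Int.cast_natCast] at hu2 hχ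
  unfold Int.ModEq at hu2
  rcases hχ with hχ | hχ <;> rw [hχ] at hu2 ⊢ <;> lia

lemma modEq_or_modEq_neg_of_sq_modEq {a σ : ℤ} (hσ : σ = 1 ∨ σ = -1)
    (h : a ^ 2 ≡ 9 - 8 * σ [ZMOD 32]) :
    a ≡ 5 - 4 * σ [ZMOD 16] ∨ a ≡ -(5 - 4 * σ) [ZMOD 16] := by
  obtain ⟨b, k, hb0, hb16, rfl⟩ : ∃ b k, 0 ≤ b ∧ b < 16 ∧ a = b + 16 * k :=
    ⟨a % 16, a / 16, by lia, by lia, by lia⟩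
  have hsq : b ^ 2 ≡ 9 - 8 * σ [ZMOD 32] :=
    .trans (Int.modEq_iff_dvd.mpr ⟨b * k + 8 * k ^ 2, by ring⟩) h
  have hb : b ≡ 5 - 4 * σ [ZMOD 16] ∨ b ≡ -(5 - 4 * σ) [ZMOD 16] := by
    clear h
    rcases hσ with rfl | rfl <;> interval_cases b <;> revert hsq <;> decide
  exact hb.imp Int.modEq_add_fac_self.trans Int.modEq_add_fac_self.trans

lemma sq_modEq_of_eq_sq_sub (hp : p % 16 = 15) (hv : Odd v) (h : (p : ℤ) = u ^ 2 - 2 * v ^ 2) :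
    (u : ℤ) ^ 2 ≡ 9 - 8 * ((-1) ^ ((p + 1) / 16) * ZMod.χ₈ v) [ZMOD 32] := by
  have hv2 := sq_modEq_five_sub_χ₈ ((Int.odd_coe_nat v).mpr hv)
  have hχ := χ₈_eq_one_or_neg_one ((Int.odd_coe_nat v).mpr hv)
  rw [Int.cast_natCast] at hv2 hχ
  unfold Int.ModEq at hv2 ⊢
  rcases ((p + 1) / 16).even_or_odd with hq | hq <;> rw [hq.neg_one_pow] <;>
    obtain ⟨k, hk⟩ := hq <;> rcases hχ with hχ | hχ <;> rw [hχ] at hv2 ⊢ <;> lia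

lemma χ₈_eq_neg_one_pow_mul_jacobiSym {w : ℕ} {s y : ℤ} (hp : p % 16 = 15)
    (h : (p : ℤ) = u ^ 2 - 2 * v ^ 2)
    (hform : (w : ℤ) ^ 2 = u * s ^ 2 + 4 * v * s * y + 2 * u * y ^ 2)
    (hsy : IsCoprime s y) (hwu : IsCoprime (w : ℤ) u) (hw : Odd w) :
    ZMod.χ₈ w = (-1) ^ ((p + 1) / 16) * J(2 * u | v) := by
  obtain ⟨-, hv⟩ := odd_and_odd_of_eq_sq_sub (by lia) h
  have hσ : (-1) ^ ((p + 1) / 16) * ZMod.χ₈ v = 1 ∨ (-1) ^ ((p + 1) / 16) * ZMod.χ₈ v = -1 := by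
    refine Int.isUnit_iff.mp ((isUnit_neg_one.pow _).mul (Int.isUnit_iff.mpr ?_))
    simpa using χ₈_eq_one_or_neg_one ((Int.odd_coe_nat v).mpr hv)
  rw [χ₈_eq_mul_jacobiSym_of_sq_eq hform hsy hwu hw hv hσ (modEq_or_modEq_neg_of_sq_modEq hσ
    (sq_modEq_of_eq_sq_sub hp hv h)), mul_assoc,
    jacobiSym.mul_left, jacobiSym.at_two hv]

end SqSubTwoMulSq

/-! ### Eight and sixteen dividing the class number -/

section ClassNumber

open Zsqrtd (sqrtd)
open Ideal NumberTheorySymbols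

variable {p u v w : ℕ}

lemma exists_zsqrtd_hom_of_eq_sq_sub (h : (p : ℤ) = u ^ 2 - 2 * v ^ 2) :
    ∃ f : ℤ√(-2 * p) →+* ZMod u, f sqrtd = (-2 * v : ℤ) :=
  exists_zsqrtd_hom ⟨2 * u, by linear_combination 2 * h⟩

lemma not_intCast_dvd_of_ker_mul_ker_sq (hw : w.Coprime (2 * p * u))
    {f : ℤ√(-2 * p) →+* ZMod u} {g : ℤ√(-2 * p) →+* ZMod w} {z : ℤ√(-2 * p)}
    (hz : RingHom.ker f * (RingHom.ker g * RingHom.ker g) = span {z}) {q : ℤ} (hq : Prime q)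
    (hqw : q ∣ w) : ¬(q : ℤ√(-2 * p)) ∣ z := by
  intro hqz
  obtain ⟨b, hb⟩ := ZMod.intCast_surjective (g sqrtd)
  have hg : sqrtd - (b : ℤ√(-2 * p)) ∈ RingHom.ker g := by
    rw [RingHom.mem_ker, map_sub, map_intCast, hb, sub_self]
  have hf : (u : ℤ√(-2 * p)) ∈ RingHom.ker f := by
    rw [RingHom.mem_ker, map_natCast, ZMod.natCast_self]
  have hmem := hz ▸ mul_mem_mul hf (mul_mem_mul hg hg)
  have hcop : IsCoprime q (2 * p * u) := by
    have := Nat.isCoprime_iff_coprime.mpr hw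
    push_cast at this
    exact this.of_isCoprime_of_dvd_left hqw
  have hub : q ∣ 2 * u * b := by
    have hdvd := ((Zsqrtd.intCast_dvd _ _).mp (hqz.trans (mem_span_singleton.mp hmem))).2
    have him : ((u : ℤ√(-2 * p)) * ((sqrtd - (b : ℤ√(-2 * p))) * (sqrtd - (b : ℤ√(-2 * p))))).im =
        -(2 * u * b) := by
      simp only [Zsqrtd.im_mul, Zsqrtd.re_mul, Zsqrtd.re_sub, Zsqrtd.im_sub, Zsqrtd.re_sqrtd,
        Zsqrtd.im_sqrtd, Zsqrtd.re_intCast, Zsqrtd.im_intCast, Zsqrtd.re_natCast,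
        Zsqrtd.im_natCast]
      ring
    rwa [him, dvd_neg] at hdvd
  have hqb : q ∣ b := IsCoprime.dvd_of_dvd_mul_left (hcop.of_isCoprime_of_dvd_right
    ⟨p, by ring⟩) hub
  have hq2p : q ∣ 2 * p * u := by
    have h := (dvd_sub_right (hqb.pow two_ne_zero)).mp
      (hqw.trans (dvd_sq_sub_of_zsqrtd_hom hb.symm))
    exact ((dvd_neg.mpr h).trans ⟨u, by ring⟩)
  exact hq.not_isUnit (hcop.isUnit_of_dvd' dvd_rfl hq2p)

variable [IsDedekindDomain (ℤ√(-2 * p))]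

lemma ker_mul_ker_mul_ker_two (h : (p : ℤ) = u ^ 2 - 2 * v ^ 2) (hu : u ≠ 0)
    {f : ℤ√(-2 * p) →+* ZMod u} (hf : f sqrtd = (-2 * v : ℤ)) (f₂ : ℤ√(-2 * p) →+* ZMod 2) :
    RingHom.ker f * RingHom.ker f * RingHom.ker f₂ = span {(⟨2 * v, 1⟩ : ℤ√(-2 * p))} := by
  obtain ⟨f', hf'⟩ : ∃ f' : ℤ√(-2 * p) →+* ZMod (u * u), f' sqrtd = (-2 * v : ℤ) :=
    exists_zsqrtd_hom ⟨2, by push_cast; linear_combination 2 * h⟩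
  obtain ⟨f'', hf''⟩ : ∃ f'' : ℤ√(-2 * p) →+* ZMod (u * u * 2), f'' sqrtd = (-2 * v : ℤ) :=
    exists_zsqrtd_hom ⟨1, by push_cast; linear_combination 2 * h⟩
  have hf₂ : f₂ sqrtd = (-2 * v : ℤ) := by
    rw [map_sqrtd_eq_zero, eq_comm, ZMod.intCast_zmod_eq_zero_iff_dvd]
    exact ⟨-v, by push_cast; ring⟩
  have hnorm : (⟨2 * v, 1⟩ : ℤ√(-2 * p)).norm = (u * u * 2 : ℕ) := by
    rw [Zsqrtd.norm_def]
    push_cast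
    linear_combination 2 * h
  rw [ker_mul_ker hf hf hf' hu hu, ker_mul_ker hf' hf₂ hf'' (mul_ne_zero hu hu) two_ne_zero]
  exact ker_eq_span_singleton ((mem_ker_iff_dvd hf'').mpr (by simp))
    (by rw [hnorm, Int.natAbs_natCast]) (by simpa using hu)

lemma idealClass_ker_sq (h : (p : ℤ) = u ^ 2 - 2 * v ^ 2) (hu : u ≠ 0)
    {f : ℤ√(-2 * p) →+* ZMod u} (hf : f sqrtd = (-2 * v : ℤ)) (f₂ : ℤ√(-2 * p) →+* ZMod 2) :
    idealClass (RingHom.ker f) ^ 2 = idealClass (RingHom.ker f₂) := by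
  have hf0 := (ker_ne_bot_iff f).mpr hu
  have h1 := congrArg idealClass (ker_mul_ker_mul_ker_two h hu hf f₂)
  rw [idealClass_mul (mul_ne_zero hf0 hf0) ((ker_ne_bot_iff f₂).mpr two_ne_zero),
    idealClass_mul hf0 hf0, idealClass_span_singleton, ← sq] at h1
  rw [eq_inv_of_mul_eq_one_left h1, inv_eq_iff_mul_eq_one, ← sq, idealClass_ker_two_sq]

lemma exists_sq_eq_of_ker_mul_ker_sq (h : (p : ℤ) = u ^ 2 - 2 * v ^ 2) (hu : u ≠ 0)
    {f : ℤ√(-2 * p) →+* ZMod u} (hf : f sqrtd = (-2 * v : ℤ)) {g : ℤ√(-2 * p) →+* ZMod w}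
    {z : ℤ√(-2 * p)} (hz : RingHom.ker f * (RingHom.ker g * RingHom.ker g) = span {z}) :
    ∃ s : ℤ, z.re = u * s + 2 * v * z.im ∧
      (w : ℤ) ^ 2 = u * s ^ 2 + 4 * v * s * z.im + 2 * u * z.im ^ 2 := by
  have hnorm : z.norm = u * (w * w) := by
    rw [← Int.natAbs_of_nonneg (Zsqrtd.norm_nonneg (by simp) z), ← absNorm_span_zsqrtd, ← hz,
      map_mul, map_mul, absNorm_ker, absNorm_ker]
    push_cast
    rfl
  have hzf : z ∈ RingHom.ker f := Ideal.mul_le_left (hz ▸ mem_span_singleton_self z)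
  obtain ⟨s, hs⟩ := (mem_ker_iff_dvd hf).mp hzf
  refine ⟨s, by linear_combination hs, ?_⟩
  refine mul_left_cancel₀ (Nat.cast_ne_zero.mpr hu : (u : ℤ) ≠ 0) ?_
  rw [Zsqrtd.norm_def] at hnorm
  linear_combination -hnorm + (z.re + u * s + 2 * v * z.im) * hs + 2 * z.im ^ 2 * h

lemma exists_sq_eq_of_idealClass_eq_one (h : (p : ℤ) = u ^ 2 - 2 * v ^ 2) (hu : u ≠ 0)
    (hw0 : w ≠ 0) (hw : w.Coprime (2 * p * u)) {f : ℤ√(-2 * p) →+* ZMod u}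
    (hf : f sqrtd = (-2 * v : ℤ)) {g : ℤ√(-2 * p) →+* ZMod w}
    (hfg : idealClass (RingHom.ker f) * idealClass (RingHom.ker g) ^ 2 = 1) :
    ∃ s y : ℤ, IsCoprime s y ∧ (w : ℤ) ^ 2 = u * s ^ 2 + 4 * v * s * y + 2 * u * y ^ 2 := by
  have hf0 := (ker_ne_bot_iff f).mpr hu
  have hg0 := (ker_ne_bot_iff g).mpr hw0
  rw [sq, ← idealClass_mul hg0 hg0, ← idealClass_mul hf0 (mul_ne_zero hg0 hg0),
    idealClass_eq_one_iff] at hfg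
  obtain ⟨z, hz⟩ := hfg
  obtain ⟨s, hre, hform⟩ := exists_sq_eq_of_ker_mul_ker_sq h hu hf hz
  refine ⟨s, z.im, isCoprime_of_prime_dvd ?_ fun q hq hqs hqy ↦ ?_, hform⟩
  · rintro ⟨rfl, hy⟩
    simp [hy, hw0] at hform
  · have hqw : q ∣ w := by
      refine hq.dvd_of_dvd_pow (n := 2) ?_
      rw [hform]
      exact dvd_add (dvd_add ((hqs.pow two_ne_zero).mul_left _) (hqy.mul_left _))
        ((hqy.pow two_ne_zero).mul_left _)
    refine not_intCast_dvd_of_ker_mul_ker_sq hw hz hq hqw ((Zsqrtd.intCast_dvd _ _).mpr ⟨?_, hqy⟩)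
    exact hre ▸ dvd_add (hqs.mul_left _) (hqy.mul_left _)

lemma orderOf_eq_two_pow_of_pow_eq (hp : 1 < p) (f₂ : ℤ√(-2 * p) →+* ZMod 2)
    {c : ClassGroup (ℤ√(-2 * p))} {k : ℕ} (h : c ^ 2 ^ k = idealClass (RingHom.ker f₂)) :
    orderOf c = 2 ^ (k + 1) :=
  orderOf_eq_prime_pow (by rw [h]; exact idealClass_ker_two_ne_one hp f₂)
    (by rw [pow_succ, pow_mul, h, idealClass_ker_two_sq])

variable [Finite (ClassGroup (ℤ√(-2 * p)))]

lemma two_pow_dvd_card_classGroup_iff (hp : p.Prime) (hp4 : p % 4 = 3)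
    (f₂ : ℤ√(-2 * p) →+* ZMod 2) {n : ℕ} (hn : Odd n) (f : ℤ√(-2 * p) →+* ZMod n) {k : ℕ}
    (h : idealClass (RingHom.ker f) ^ 2 ^ k = idealClass (RingHom.ker f₂)) :
    2 ^ (k + 2) ∣ Nat.card (ClassGroup (ℤ√(-2 * p))) ↔ ZMod.χ₈ n = 1 := by
  rw [two_pow_dvd_card_iff_isSquare
    (eq_one_or_eq_idealClass_ker_two hp (Nat.odd_iff.mpr (by lia)) f₂)
    (orderOf_eq_two_pow_of_pow_eq hp.one_lt f₂ h),
    isSquare_idealClass_iff hp hp4 (by rwa [absNorm_ker]), absNorm_ker]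

lemma eight_dvd_card_classGroup_iff (hp : p.Prime) (hp8 : p % 8 = 7)
    (h : (p : ℤ) = u ^ 2 - 2 * v ^ 2) :
    8 ∣ Nat.card (ClassGroup (ℤ√(-2 * p))) ↔ p % 16 = 15 := by
  obtain ⟨hu, -⟩ := odd_and_odd_of_eq_sq_sub hp8 h
  obtain ⟨f₂, -⟩ := exists_zsqrtd_hom_two (p := p)
  obtain ⟨f, hf⟩ := exists_zsqrtd_hom_of_eq_sq_sub h
  rw [← χ₈_eq_one_iff_of_eq_sq_sub hp8 h]
  exact two_pow_dvd_card_classGroup_iff (k := 1) hp (by lia) f₂ hu f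
    (idealClass_ker_sq h hu.pos.ne' hf f₂)

lemma exists_idealClass_ker_pow_four_eq (hp : p.Prime) (hp16 : p % 16 = 15)
    (h : (p : ℤ) = u ^ 2 - 2 * v ^ 2) (f₂ : ℤ√(-2 * p) →+* ZMod 2) :
    ∃ (w : ℕ) (g : ℤ√(-2 * p) →+* ZMod w) (s y : ℤ), Odd w ∧ IsCoprime (w : ℤ) u ∧
      IsCoprime s y ∧ (w : ℤ) ^ 2 = u * s ^ 2 + 4 * v * s * y + 2 * u * y ^ 2 ∧
      idealClass (RingHom.ker g) ^ 2 ^ 2 = idealClass (RingHom.ker f₂) := by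
  obtain ⟨hu, -⟩ := odd_and_odd_of_eq_sq_sub (by lia) h
  obtain ⟨f, hf⟩ := exists_zsqrtd_hom_of_eq_sq_sub h
  have hf2 := idealClass_ker_sq h hu.pos.ne' hf f₂
  obtain ⟨t, ht⟩ : IsSquare (idealClass (RingHom.ker f)) := by
    rw [isSquare_idealClass_iff hp (by lia) (by rwa [absNorm_ker]), absNorm_ker]
    exact (χ₈_eq_one_iff_of_eq_sq_sub (by lia) h).mpr hp16
  obtain ⟨w, g, hw0, hw, hg⟩ := exists_idealClass_ker_eq t⁻¹ (M := 2 * p * u)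
    (mul_ne_zero (mul_ne_zero two_ne_zero hp.ne_zero) hu.pos.ne')
  obtain ⟨s, y, hsy, hform⟩ := exists_sq_eq_of_idealClass_eq_one h hu.pos.ne' hw0 hw hf (g := g)
    (by rw [hg, ht]; group)
  refine ⟨w, g, s, y, Nat.coprime_two_right.mp (hw.coprime_dvd_right ⟨p * u, by ring⟩),
    Nat.isCoprime_iff_coprime.mpr hw.coprime_mul_left_right, hsy, hform, ?_⟩
  calc idealClass (RingHom.ker g) ^ 2 ^ 2
      = ((t * t) ^ 2)⁻¹ := by rw [hg, ← sq, inv_pow, ← pow_mul]; rfl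
    _ = idealClass (RingHom.ker f₂) := by
      rw [← ht, hf2, inv_eq_iff_mul_eq_one, ← sq, idealClass_ker_two_sq]

lemma not_sixteen_dvd_card_classGroup_iff (hp : p.Prime) (hp16 : p % 16 = 15)
    (h : (p : ℤ) = u ^ 2 - 2 * v ^ 2) :
    ¬16 ∣ Nat.card (ClassGroup (ℤ√(-2 * p))) ↔
      (-1) ^ ((p + 1) / 16) * J(2 * u | v) = -1 := by
  obtain ⟨f₂, -⟩ := exists_zsqrtd_hom_two (p := p)
  obtain ⟨w, g, s, y, hw, hwu, hsy, hform, hg⟩ := exists_idealClass_ker_pow_four_eq hp hp16 h f₂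
  have hχ : ZMod.χ₈ w = 1 ∨ ZMod.χ₈ w = -1 := by
    exact_mod_cast χ₈_eq_one_or_neg_one ((Int.odd_coe_nat w).mpr hw)
  rw [← χ₈_eq_neg_one_pow_mul_jacobiSym hp16 h hform hsy hwu hw, show 16 = 2 ^ (2 + 2) from rfl,
    two_pow_dvd_card_classGroup_iff hp (by lia) f₂ hw g hg]
  rcases hχ with hχ | hχ <;> simp [hχ]

end ClassNumber

/-! ### The ring of integers -/

section RingOfIntegers

open QuadraticAlgebra (omega)

lemma exists_intCast_eq_of_mul_sq_eq {d n : ℤ} (hd : Squarefree d) {q : ℚ} (h : d * q ^ 2 = n) :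
    ∃ m : ℤ, q = m := by
  have hnum : d * q.num ^ 2 = (q.den : ℤ) ^ 2 * n := by
    rw [← Rat.num_div_den q] at h
    field_simp at h
    exact_mod_cast h
  have hdvd : (q.den : ℤ) * q.den ∣ d := by
    rw [← sq]
    exact (Rat.isCoprime_num_den q).symm.pow.dvd_of_dvd_mul_right ⟨n, hnum⟩
  have hden : q.den = 1 := by simpa using Int.isUnit_iff_natAbs_eq.mp (hd _ hdvd)
  exact ⟨q.num, (Rat.coe_int_num_of_den_eq_one hden).symm⟩

lemma even_of_sq_sub_mul_sq_eq {d m k n : ℤ} (hd : d % 4 = 2 ∨ d % 4 = 3)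
    (h : m ^ 2 - d * k ^ 2 = 4 * n) : Even m ∧ Even k := by
  obtain ⟨d', hd'⟩ : ∃ d', d = 4 * d' + 2 ∨ d = 4 * d' + 3 := ⟨d / 4, by lia⟩
  obtain ⟨a, rfl | rfl⟩ := m.even_or_odd' <;> obtain ⟨b, rfl | rfl⟩ := k.even_or_odd'
  · simp
  all_goals
    rcases hd' with rfl | rfl <;> ring_nf at h <;> lia

lemma exists_intCast_eq_of_trace_norm {d m n : ℤ} (hd : Squarefree d)
    (hd4 : d % 4 = 2 ∨ d % 4 = 3) {a b : ℚ} (htrace : 2 * a = m) (hnorm : a ^ 2 - d * b ^ 2 = n) :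
    ∃ x y : ℤ, a = x ∧ b = y := by
  obtain ⟨k, hk⟩ : ∃ k : ℤ, 2 * b = k :=
    exists_intCast_eq_of_mul_sq_eq (n := m ^ 2 - 4 * n) hd <| by
      push_cast
      rw [← htrace, ← hnorm]
      ring
  have hmk : m ^ 2 - d * k ^ 2 = 4 * n := by
    have : (m : ℚ) ^ 2 - d * k ^ 2 = 4 * n := by
      rw [← htrace, ← hk, ← hnorm]
      ring
    exact_mod_cast this
  obtain ⟨⟨x, rfl⟩, ⟨y, rfl⟩⟩ := even_of_sq_sub_mul_sq_eq hd4 hmk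
  push_cast at htrace hk
  exact ⟨x, y, by linarith, by linarith⟩

/-- The embedding of `ℤ√d` in `ℚ[√d]`, the latter encoded as the quadratic algebra in which
`omega ^ 2 = d`. -/
noncomputable def zsqrtdEmbedding (d : ℤ) : ℤ√d →+* QuadraticAlgebra ℚ d 0 :=
  Zsqrtd.lift ⟨omega, by ext <;> simp⟩

lemma zsqrtdEmbedding_apply {d : ℤ} (z : ℤ√d) : zsqrtdEmbedding d z = ⟨z.re, z.im⟩ := by
  ext <;> simp [zsqrtdEmbedding, Zsqrtd.lift]

lemma isIntegral_quadraticAlgebra_iff {d : ℤ} (hd : Squarefree d) (hd4 : d % 4 = 2 ∨ d % 4 = 3)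
    {z : QuadraticAlgebra ℚ d 0} : IsIntegral ℤ z ↔ ∃ w : ℤ√d, zsqrtdEmbedding d w = z := by
  constructor
  · intro hz
    have hz' : IsIntegral ℤ (star z) :=
      hz.map (starRingEnd (QuadraticAlgebra ℚ d 0)).toIntAlgHom
    have hinj := FaithfulSMul.algebraMap_injective ℚ (QuadraticAlgebra ℚ d 0)
    have htrace := hz.add hz'
    have hnorm := hz.mul hz'
    rw [← QuadraticAlgebra.algebraMap_trace_eq_add_star, isIntegral_algebraMap_iff hinj,
      IsIntegrallyClosed.isIntegral_iff] at htrace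
    rw [← QuadraticAlgebra.algebraMap_norm_eq_mul_star, isIntegral_algebraMap_iff hinj,
      IsIntegrallyClosed.isIntegral_iff] at hnorm
    obtain ⟨m, hm⟩ := htrace
    obtain ⟨n, hn⟩ := hnorm
    obtain ⟨x, y, hx, hy⟩ := exists_intCast_eq_of_trace_norm hd hd4 (a := z.re) (b := z.im)
      (m := m) (n := n) (by simpa [QuadraticAlgebra.trace_def] using hm.symm)
      (by rw [eq_intCast] at hn; rw [hn, QuadraticAlgebra.norm_def]; ring)
    exact ⟨⟨x, y⟩, by rw [zsqrtdEmbedding_apply, ← hx, ← hy]⟩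
  · rintro ⟨w, rfl⟩
    exact (Algebra.IsIntegral.isIntegral (R := ℤ) w).map (zsqrtdEmbedding d).toIntAlgHom

/-- The isomorphism of `R[X]/(X² + c)` with the quadratic algebra in which `omega ^ 2 = -c`,
sending the root to `omega`. -/
noncomputable def adjoinRootEquivQuadraticAlgebra {R : Type*} [CommRing R] (c : R) :
    AdjoinRoot (X ^ 2 + C c) ≃ₐ[R] QuadraticAlgebra R (-c) 0 :=
  .ofAlgHom
    (AdjoinRoot.liftAlgHom _ (Algebra.ofId R _) omega (by ext <;> simp [sq]))
    (QuadraticAlgebra.lift ⟨AdjoinRoot.root _, by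
      have h := AdjoinRoot.eval₂_root (X ^ 2 + C c)
      simp only [eval₂_add, eval₂_pow, eval₂_X, eval₂_C] at h
      rw [zero_smul, add_zero, Algebra.smul_def, mul_one, map_neg, ← sq]
      exact eq_neg_of_add_eq_zero_left h⟩)
    (by ext <;> simp)
    (by ext; simp)

variable {F : Type*} [Field F] {d : ℤ}

lemma exists_isIntegralClosure_zsqrtd (hd : Squarefree d) (hd4 : d % 4 = 2 ∨ d % 4 = 3)
    [Algebra ℚ F] (e : F ≃ₐ[ℚ] QuadraticAlgebra ℚ d 0) :
    ∃ _ : Algebra (ℤ√d) F, IsIntegralClosure (ℤ√d) ℤ F := by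
  let φ : ℤ√d →+* F := (e.symm : _ →+* F).comp (zsqrtdEmbedding d)
  let := φ.toAlgebra
  refine ⟨inferInstance, ⟨?_, @fun x ↦ ?_⟩⟩
  · refine e.symm.injective.comp fun z w hzw ↦ ?_
    simpa [zsqrtdEmbedding_apply, Zsqrtd.ext_iff] using hzw
  · rw [← isIntegral_algEquiv (e.restrictScalars ℤ)]
    refine (isIntegral_quadraticAlgebra_iff hd hd4).trans (exists_congr fun w ↦ ?_)
    exact e.symm_apply_eq.symm

variable [NumberField F] (R : Type*) [CommRing R] [IsDomain R] [Algebra R F]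
  [IsIntegralClosure R ℤ F]

lemma classNumber_eq_card_classGroup : classNumber F = Nat.card (ClassGroup R) := by
  rw [classNumber, ← Nat.card_eq_fintype_card]
  exact Nat.card_congr (ClassGroup.mulEquiv (RingOfIntegers.equiv R)).toEquiv

lemma squarefree_neg_two_mul {p : ℕ} (hp : p.Prime) (hp2 : Odd p) : Squarefree (-2 * p : ℤ) := by
  rw [neg_mul, ← Int.squarefree_natAbs, Int.natAbs_neg, Int.natAbs_mul, Int.natAbs_natCast]
  exact (Nat.squarefree_mul (Nat.coprime_two_left.mpr hp2)).mpr
    ⟨Nat.prime_two.squarefree, hp.squarefree⟩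

end RingOfIntegers

/-- **Leonard–Williams.** For a prime `p ≡ -1 (mod 8)`, writing `h(-2p)`
for the class number of `ℚ(√(-2p)) = ℚ[x]/(x² + 2p)`, one has `8 ∥ h(-2p)` if and only if
`p ≡ -1 (mod 16)` and `(-1)^((p+1)/16) · (p) = -1`, where `(p)` is the Jacobi symbol
`(2u/v)` for any positive integers `u, v` with `p = u² - 2v²`. -/
theorem eight_exactly_divides_classNumber_neg_two_p_iff
    (p : ℕ) (hp : p.Prime) (hmod : p % 8 = 7)
    (F : Type*) [Field F] [NumberField F]
    (hF : Nonempty (F ≃ₐ[ℚ] AdjoinRoot (X ^ 2 + C (2 * p : ℚ)))) :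
    (8 ∣ classNumber F ∧ ¬ 16 ∣ classNumber F) ↔
      (p % 16 = 15 ∧
        ∀ u v : ℕ, 0 < u → 0 < v → (p : ℤ) = u ^ 2 - 2 * v ^ 2 →
          (-1 : ℤ) ^ ((p + 1) / 16) * jacobiSym (2 * u) v = -1) := by
  have := Fact.mk hp
  obtain ⟨e⟩ := hF
  have hd : ((-2 * p : ℤ) : ℚ) = -(2 * p) := by push_cast; ring
  obtain ⟨_, _⟩ := exists_isIntegralClosure_zsqrtd (d := -2 * p) (F := F)
    (squarefree_neg_two_mul hp (Nat.odd_iff.mpr (by lia))) (by lia)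
    (hd ▸ e.trans (adjoinRootEquivQuadraticAlgebra (2 * p : ℚ)))
  have := (IsIntegralClosure.algebraMap_injective (ℤ√(-2 * p)) ℤ F).isDomain
  have := IsIntegralClosure.isDedekindDomain ℤ ℚ F (ℤ√(-2 * p))
  have : Finite (ClassGroup (ℤ√(-2 * p))) :=
    .of_equiv _ (ClassGroup.mulEquiv (RingOfIntegers.equiv (K := F) (ℤ√(-2 * p)))).toEquiv
  obtain ⟨u, v, h⟩ := exists_eq_sq_sub_two_mul_sq hp
    ((ZMod.exists_sq_eq_two_iff (by lia)).mpr (.inr hmod))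
  obtain ⟨hu, hv⟩ := odd_and_odd_of_eq_sq_sub hmod h
  rw [classNumber_eq_card_classGroup (ℤ√(-2 * p)), eight_dvd_card_classGroup_iff hp hmod h]
  refine and_congr_right fun hp16 ↦ ⟨fun h16 u v _ _ huv ↦ ?_, fun hJ ↦ ?_⟩
  · exact (not_sixteen_dvd_card_classGroup_iff hp hp16 huv).mp h16
  · exact (not_sixteen_dvd_card_classGroup_iff hp hp16 h).mpr (hJ u v hu.pos hv.pos h)
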